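/- arXiv:1001.2209 — 12 statements merged into one kernel-verified Lean document; each statement's English description precedes it below -/
import Mathlib

section
/- For every odd integer r ≥ 3, the minimum number of colors in a 4-distance coloring of the hypercube of dimension 2^{r+1} − 1 satisfies χ'_4(2^{r+1} − 1) = 2^{2r+1}. -/
/-!
Put `n = 2 ^ (r + 1) - 1`.

*Upper bound.* The colors are the syndromes of the `ℤ/4`-linear (extended) Preparata code. Let `F` be
the field with `2 ^ r` elements and `W` the additive group of Witt vectors of length two over `F`,
with Teichmüller elements `T a`. A word `u` of length `n` is extended by its parity bit to an even
word of length `2 ^ (r + 1) = 2 * |F|`, read through the inverse Gray map as a vector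
`z : F → ℤ/4`, and colored by `(∑ z t, ∑ z t • T t)`. Evenness leaves two possible values for the
first component, so there are `2 * 4 ^ r` colors. If two words at distance at most `4` have the same
color, the difference of the two vectors `z` is a sum of at most four terms `± e_t` with zero syndrome
(`exists_signs`), and such a sum vanishes (`signed_four`, `signed_two`): from
`T a + T b = T c + T d` follows `{a, b} = {c, d}`, and `T a + T b + T c + T d = 0` becomes
`x ^ 2 + x * y + y ^ 2 = 0` for `x = a + c`, `y = b + c`, which forces `x = y = 0` because `F`,
of odd degree over its prime field, has no primitive cube root of unity.

*Lower bound.* A color class `C` is a code of minimum distance at least `5`, and the Johnson bound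
reads `|C| * (n + 1) ^ 2 ≤ 2 * 2 ^ n` (`card_code_mul_le`). There are exactly `|C| * n.choose k` words
at distance `k ≤ 2` from `C`. If `x` is at distance `2` from `C`, the sets of positions in which
`x` differs from the codewords within distance `3` are pairwise disjoint, one of size `2` and the
others of size `3`; as `3 ∣ n`, they miss a position, and flipping it in `x` gives a word at distance
at least `3` from `C`. Each word arises in this way at most `n` times, which yields at least
`|C| * (n - 1) / 2` words at distance at least `3`.
-/

/-- `V n` is the set of binary words of length `n`. -/
abbrev V (n : ℕ) := Fin n → ZMod 2

/-- A `d`-distance coloring of `V n` with `L` colors. -/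
def IsDistColoring (n d L : ℕ) (Γ : V n → Fin L) : Prop :=
  ∀ u v : V n, u ≠ v → hammingDist u v ≤ d → Γ u ≠ Γ v

/-- `chi' d n` is the minimum number of colors of a `d`-distance coloring of `V n`. -/
noncomputable def chi' (d n : ℕ) : ℕ :=
  sInf {L : ℕ | ∃ Γ : V n → Fin L, IsDistColoring n d L Γ}

/-- An exactly `d`-distance coloring of `V n` with `L` colors. -/
def IsExactColoring (n d L : ℕ) (Γ : V n → Fin L) : Prop :=
  ∀ u v : V n, hammingDist u v = d → Γ u ≠ Γ v

/-- `chi d n` is the minimum number of colors of an exactly `d`-distance coloring of `V n`. -/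
noncomputable def chi (d n : ℕ) : ℕ :=
  sInf {L : ℕ | ∃ Γ : V n → Fin L, IsExactColoring n d L Γ}

/-- `kdist n d` is the maximum dimension of a linear subspace of `V n` in which
every nonzero element has Hamming weight at least `d`. -/
noncomputable def kdist (n d : ℕ) : ℕ :=
  sSup {k : ℕ | ∃ C : Submodule (ZMod 2) (V n),
    Module.finrank (ZMod 2) C = k ∧ ∀ c ∈ C, c ≠ 0 → d ≤ hammingNorm c}

/-- `kbar n d` is the maximum dimension of a linear subspace of `V n` in which
no nonzero element has Hamming weight exactly `d`. -/
noncomputable def kbar (n d : ℕ) : ℕ :=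
  sSup {k : ℕ | ∃ C : Submodule (ZMod 2) (V n),
    Module.finrank (ZMod 2) C = k ∧ ∀ c ∈ C, c ≠ 0 → hammingNorm c ≠ d}

/-- `Acode n d` is the maximum size of a binary code of length `n` and minimum distance ≥ `d`. -/
noncomputable def Acode (n d : ℕ) : ℕ :=
  sSup {m : ℕ | ∃ C : Finset (V n), C.card = m ∧
    ∀ a ∈ C, ∀ b ∈ C, a ≠ b → d ≤ hammingDist a b}

/-- `Qcode n d` is the maximum size of a binary `(n, {d̄})` forbidden distance code. -/
noncomputable def Qcode (n d : ℕ) : ℕ :=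
  sSup {m : ℕ | ∃ C : Finset (V n), C.card = m ∧
    ∀ a ∈ C, ∀ b ∈ C, a ≠ b → hammingDist a b ≠ d}

/-- The Lee weight on `ZMod 4`: 0 ↦ 0, 1 ↦ 1, 2 ↦ 2, 3 ↦ 1. -/
def leeWt (x : ZMod 4) : ℕ := min x.val (4 - x.val)

/-- The Lee weight of a vector in `(ZMod 4)^n`. -/
def leeWtVec {n : ℕ} (x : Fin n → ZMod 4) : ℕ := ∑ i, leeWt (x i)

/-- The Lee distance on `(ZMod 4)^n`. -/
def leeDist {n : ℕ} (x y : Fin n → ZMod 4) : ℕ := leeWtVec (x - y)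

/-- The Gray map `ZMod 4 → (ZMod 2)^2`: 0 ↦ 00, 1 ↦ 01, 2 ↦ 11, 3 ↦ 10. -/
def gray (x : ZMod 4) : Fin 2 → ZMod 2 :=
  ![if 2 ≤ x.val then 1 else 0, if x.val = 1 ∨ x.val = 2 then 1 else 0]

/-- The Gray map extended coordinatewise to `(ZMod 4)^n → (ZMod 2)^{2n}`. -/
def grayMap {n : ℕ} (x : Fin n → ZMod 4) : V (2 * n) :=
  fun j => gray (x ⟨j.val / 2, by have := j.isLt; omega⟩) ⟨j.val % 2, by omega⟩

open Finset

/-! ### Johnson's bound for codes of minimum distance five -/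

section Lower

variable {n : ℕ}

/-- The binary word with support `s`. -/
def ind (s : Finset (Fin n)) : V n := fun i => if i ∈ s then 1 else 0

lemma zmod2_ne {a b c : ZMod 2} (h1 : a ≠ c) (h2 : b ≠ c) : a = b := by
  revert a b c; decide

lemma hammingDist_add_ind (c : V n) (s : Finset (Fin n)) : hammingDist c (c + ind s) = #s := by
  unfold hammingDist
  congr 1
  ext i
  by_cases h : i ∈ s <;> simp [ind, h]

lemma ind_injective : Function.Injective (ind (n := n)) := by
  intro s t h
  ext i
  have := congrFun h i
  by_cases h1 : i ∈ s <;> by_cases h2 : i ∈ t <;> simp_all [ind]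

/-- The words at distance exactly `k` from some word of `C`. -/
def shell (C : Finset (V n)) (k : ℕ) : Finset (V n) :=
  univ.filter fun x => ∃ c ∈ C, hammingDist c x = k

lemma card_shell (C : Finset (V n)) (hC : ∀ a ∈ C, ∀ b ∈ C, a ≠ b → 5 ≤ hammingDist a b)
    (k : ℕ) (hk : k ≤ 2) : #C * n.choose k ≤ #(shell C k) := by
  have h1 : #(C ×ˢ powersetCard k (univ : Finset (Fin n))) = #C * n.choose k := by
    simp [card_product, card_powersetCard]
  rw [← h1]
  apply card_le_card_of_injOn (fun p => p.1 + ind p.2)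
  · rintro ⟨c, s⟩ h
    simp only [coe_product, Set.mem_prod, mem_coe, mem_powersetCard] at h
    simp only [shell, coe_filter, mem_univ, true_and, Set.mem_ofPred_eq]
    exact ⟨c, h.1, by rw [hammingDist_add_ind, h.2.2]⟩
  · rintro ⟨c, s⟩ h ⟨c', s'⟩ h' heq
    simp only [coe_product, Set.mem_prod, mem_coe, mem_powersetCard] at h h' heq
    have hcc : c = c' := by
      by_contra hne
      have h5 := hC c h.1 c' h'.1 hne
      have ht := hammingDist_triangle c (c + ind s) c'
      have e1 := hammingDist_add_ind c s
      have e2 := hammingDist_add_ind c' s'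
      rw [hammingDist_comm, ← heq] at e2
      omega
    subst hcc
    have := ind_injective (add_left_cancel heq)
    rw [this]

/-- The positions in which `c` and `x` differ. -/
def diffSet (c x : V n) : Finset (Fin n) := univ.filter fun i => c i ≠ x i

lemma card_diffSet (c x : V n) : #(diffSet c x) = hammingDist c x := rfl

lemma diffSet_disjoint (C : Finset (V n)) (hC : ∀ a ∈ C, ∀ b ∈ C, a ≠ b → 5 ≤ hammingDist a b)
    (x a b : V n) (ha : a ∈ C) (hb : b ∈ C) (hab : a ≠ b) (hax : hammingDist a x ≤ 3)
    (hbx : hammingDist b x ≤ 3) : Disjoint (diffSet a x) (diffSet b x) := by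
  rw [disjoint_left]
  intro k hka hkb
  have h5 := hC a ha b hb hab
  have hsub : diffSet a b ⊆ ((diffSet a x) ∪ ((diffSet b x).erase k)).erase k := by
    intro i hi
    simp only [diffSet, mem_filter, mem_univ, true_and, mem_erase, mem_union] at *
    refine ⟨?_, ?_⟩
    · rintro rfl
      exact hi (zmod2_ne hka hkb)
    · by_cases h : a i = x i
      · right
        refine ⟨?_, fun hbi => hi (h.trans hbi.symm)⟩
        rintro rfl
        exact hka h
      · exact Or.inl h
  have h1 := card_le_card hsub
  rw [card_erase_of_mem (mem_union_left _ hka)] at h1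
  have h2 := card_union_le (diffSet a x) ((diffSet b x).erase k)
  rw [card_erase_of_mem hkb] at h2
  simp only [card_diffSet] at h1 h2
  omega

lemma hammingDist_flip (c x : V n) (k : Fin n) (hk : k ∉ diffSet c x) :
    hammingDist c (x + ind {k}) = hammingDist c x + 1 := by
  have : diffSet c (x + ind {k}) = insert k (diffSet c x) := by
    ext i
    by_cases h : i = k
    · subst h
      simp only [diffSet, mem_filter, mem_univ, true_and, not_not] at hk
      simp [diffSet, ind, hk]
    · simp [diffSet, ind, h]
  rw [← card_diffSet, this, card_insert_of_notMem hk, card_diffSet]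

/-- Counting modulo `3`, the difference sets of `x` to the codewords within distance `3` cannot
exhaust all positions. -/
lemma exists_far (hn : 3 ∣ n) (C : Finset (V n))
    (hC : ∀ a ∈ C, ∀ b ∈ C, a ≠ b → 5 ≤ hammingDist a b) (x : V n) (hx : x ∈ shell C 2) :
    ∃ k : Fin n, ∀ c ∈ C, 3 ≤ hammingDist c (x + ind {k}) := by
  simp only [shell, mem_filter, mem_univ, true_and] at hx
  obtain ⟨c, hc, hcx⟩ := hx
  set C3 := C.filter fun c => hammingDist c x ≤ 3 with hC3
  have hcC3 : c ∈ C3 := by simp [hC3, hc, hcx]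
  have hoth : ∀ a ∈ C3.erase c, hammingDist a x = 3 := by
    intro a ha
    simp only [hC3, mem_erase, mem_filter] at ha
    have h5 := hC c hc a ha.2.1 (Ne.symm ha.1)
    have := hammingDist_triangle c x a
    rw [hammingDist_comm x a] at this
    omega
  have hcard : #(C3.biUnion fun a => diffSet a x) = 2 + 3 * #(C3.erase c) := by
    rw [card_biUnion, ← add_sum_erase _ _ hcC3, card_diffSet, hcx]
    · congr 1
      rw [sum_congr rfl (g := fun _ => 3)]
      · simp [mul_comm]
      · intro a ha
        rw [card_diffSet, hoth a ha]
    · intro a ha b hb hab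
      simp only [hC3, mem_coe, mem_filter] at ha hb
      exact diffSet_disjoint C hC x a b ha.1 hb.1 hab ha.2 hb.2
  -- The union has size `2` modulo `3`, whereas `3 ∣ n`.
  have hne : (C3.biUnion fun a => diffSet a x) ≠ univ := by
    intro h
    rw [h, card_univ, Fintype.card_fin] at hcard
    omega
  obtain ⟨k, hk⟩ : ∃ k, k ∉ (C3.biUnion fun a => diffSet a x) := by
    by_contra! h
    exact hne (eq_univ_iff_forall.2 h)
  refine ⟨k, fun a ha => ?_⟩
  simp only [mem_biUnion, not_exists, not_and] at hk
  by_cases ha3 : a ∈ C3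
  · rw [hammingDist_flip a x k (hk a ha3)]
    by_cases hac : a = c
    · rw [hac, hcx]
    · rw [hoth a (mem_erase.2 ⟨hac, ha3⟩)]
      omega
  · have h4 : 3 < hammingDist a x := by
      by_contra! h
      exact ha3 (mem_filter.2 ⟨ha, h⟩)
    have h1 := hammingDist_triangle a (x + ind {k}) x
    have h2 := hammingDist_add_ind x {k}
    rw [hammingDist_comm, card_singleton] at h2
    omega

lemma ind_add_self (s : Finset (Fin n)) : ind s + ind s = 0 := by
  ext i
  exact CharTwo.add_self_eq_zero _

/-- Johnson's bound for minimum distance `5` and length divisible by `3`. -/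
lemma card_code_mul_le (hn : 3 ∣ n) (hn0 : 0 < n) (C : Finset (V n))
    (hC : ∀ a ∈ C, ∀ b ∈ C, a ≠ b → 5 ≤ hammingDist a b) :
    #C * (n + 1) ^ 2 ≤ 2 * 2 ^ n := by
  set N : Finset (V n) := univ.filter fun x => ∀ c ∈ C, 3 ≤ hammingDist c x with hN
  have hshell : ∀ i j, i ≤ 2 → j ≤ 2 → i ≠ j → Disjoint (shell C i) (shell C j) := by
    intro i j hi hj hij
    rw [disjoint_left]
    intro x h1 h2
    simp only [shell, mem_filter, mem_univ, true_and] at h1 h2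
    obtain ⟨a, ha, hax⟩ := h1
    obtain ⟨b, hb, hbx⟩ := h2
    have hab : a ≠ b := by
      rintro rfl
      omega
    have h5 := hC a ha b hb hab
    have := hammingDist_triangle a x b
    rw [hammingDist_comm x b] at this
    omega
  have hshellN : ∀ i ≤ 2, Disjoint (shell C i) N := by
    intro i hi
    rw [disjoint_left]
    intro x h1 h2
    simp only [shell, hN, mem_filter, mem_univ, true_and] at h1 h2
    obtain ⟨a, ha, hax⟩ := h1
    have := h2 a ha
    omega
  have htot : #(shell C 0) + #(shell C 1) + #(shell C 2) + #N ≤ 2 ^ n := by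
    rw [← card_union_of_disjoint (hshell 0 1 (by omega) (by omega) (by omega)),
      ← card_union_of_disjoint, ← card_union_of_disjoint]
    · refine (card_le_univ _).trans ?_
      simp [ZMod.card]
    · simp only [disjoint_union_left]
      exact ⟨⟨hshellN 0 (by omega), hshellN 1 (by omega)⟩, hshellN 2 (by omega)⟩
    · simp only [disjoint_union_left]
      exact ⟨hshell 0 2 (by omega) (by omega) (by omega),
        hshell 1 2 (by omega) (by omega) (by omega)⟩
  have hfar : #(shell C 2) ≤ n * #N := by
    have : Nonempty (Fin n) := ⟨⟨0, hn0⟩⟩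
    choose! κ hκ using exists_far hn C hC
    apply card_le_mul_card_image_of_maps_to (f := fun x => x + ind {κ x})
    · intro x hx
      simp only [hN, mem_filter, mem_univ, true_and]
      exact hκ x hx
    · intro w _
      calc _ ≤ #((univ : Finset (Fin n)).image fun k => w + ind {k}) := by
            apply card_le_card
            intro x hx
            simp only [mem_filter] at hx
            simp only [mem_image, mem_univ, true_and]
            refine ⟨κ x, ?_⟩
            rw [← hx.2, add_assoc, ind_add_self, add_zero]
        _ ≤ n := card_image_le.trans (by simp)
  have h0 := card_shell C hC 0 (by omega)
  have h1 := card_shell C hC 1 (by omega)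
  have h2 := card_shell C hC 2 le_rfl
  simp only [Nat.choose_zero_right, Nat.choose_one_right, mul_one] at h0 h1
  have h3 : 2 * n.choose 2 + n = n * n := by
    obtain ⟨m, rfl⟩ : ∃ m, n = m + 1 := ⟨n - 1, by omega⟩
    have h4 := Nat.div_mul_cancel (Nat.even_mul_succ_self m).two_dvd
    rw [Nat.choose_two_right, Nat.add_sub_cancel, mul_comm (m + 1) m, mul_comm 2, h4]
    ring
  have key : n * (#C * (n + 1) ^ 2) ≤ n * (2 * 2 ^ n) := by
    nlinarith
  exact Nat.le_of_mul_le_mul_left key hn0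

/-- Each of the `L` color classes obeys Johnson's bound, and their sizes add up to `2 ^ n`. -/
lemma lower_bound (L : ℕ) (hn : 3 ∣ n) (hn0 : 0 < n) (Γ : V n → Fin L)
    (hΓ : IsDistColoring n 4 L Γ) : (n + 1) ^ 2 ≤ 2 * L := by
  have hclass : ∀ l : Fin L, #(univ.filter fun x => Γ x = l) * (n + 1) ^ 2 ≤ 2 * 2 ^ n := by
    intro l
    apply card_code_mul_le hn hn0
    intro a ha b hb hab
    simp only [mem_filter, mem_univ, true_and] at ha hb
    by_contra! h
    exact hΓ a b hab (by omega) (ha.trans hb.symm)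
  have hsum : 2 ^ n = ∑ l : Fin L, #(univ.filter fun x => Γ x = l) := by
    rw [← card_eq_sum_card_fiberwise (f := Γ) (s := univ) (t := univ) (by simp)]
    simp [ZMod.card]
  have h := sum_le_sum fun l (_ : l ∈ univ) => hclass l
  rw [← sum_mul, ← hsum] at h
  simp only [sum_const, card_univ, Fintype.card_fin, smul_eq_mul] at h
  have h2 : 0 < 2 ^ n := by positivity
  nlinarith

end Lower

/-! ### Witt vectors of length two and the syndrome identity -/

/-- Witt vectors `(x, y)` of length two over a field `F` of characteristic `2`, as an additive
group: the Witt polynomials give `(x, y) + (x', y') = (x + x', y + y' + x * x')`. -/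
@[ext] structure Witt2 (F : Type*) where
  x : F
  y : F

namespace Witt2

variable {F : Type*} [Field F] [CharP F 2]

instance : Add (Witt2 F) := ⟨fun a b => ⟨a.x + b.x, a.y + b.y + a.x * b.x⟩⟩
instance : Zero (Witt2 F) := ⟨⟨0, 0⟩⟩
instance : Neg (Witt2 F) := ⟨fun a => ⟨a.x, a.y + a.x * a.x⟩⟩

omit [CharP F 2] in
@[simp] lemma add_x (a b : Witt2 F) : (a + b).x = a.x + b.x := rfl
omit [CharP F 2] in
@[simp] lemma add_y (a b : Witt2 F) : (a + b).y = a.y + b.y + a.x * b.x := rfl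
omit [CharP F 2] in
@[simp] lemma zero_x : (0 : Witt2 F).x = 0 := rfl
omit [CharP F 2] in
@[simp] lemma zero_y : (0 : Witt2 F).y = 0 := rfl
omit [CharP F 2] in
@[simp] lemma neg_x (a : Witt2 F) : (-a).x = a.x := rfl
omit [CharP F 2] in
@[simp] lemma neg_y (a : Witt2 F) : (-a).y = a.y + a.x * a.x := rfl

instance : AddCommGroup (Witt2 F) where
  add_assoc a b c := by ext <;> simp <;> ring
  zero_add a := by ext <;> simp
  add_zero a := by ext <;> simp
  add_comm a b := by ext <;> simp <;> ring
  nsmul := nsmulRec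
  zsmul := zsmulRec
  neg_add_cancel a := by
    have h : (2 : F) = 0 := CharTwo.two_eq_zero
    ext
    · simp only [add_x, neg_x, zero_x]
      linear_combination a.x * h
    · simp only [add_y, neg_y, neg_x, zero_y]
      linear_combination (a.y + a.x * a.x) * h

lemma four_nsmul (a : Witt2 F) : 4 • a = 0 := by
  have h : (2 : F) = 0 := CharTwo.two_eq_zero
  have e : 4 • a = a + a + (a + a) := by abel
  rw [e]
  ext
  · simp only [add_x, zero_x]
    linear_combination (2 * a.x) * h
  · simp only [add_x, add_y, zero_y]
    linear_combination (2 * a.y + 3 * a.x * a.x) * h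

instance : Module (ZMod 4) (Witt2 F) := AddCommGroup.zmodModule four_nsmul

/-- The Teichmüller representative of `a`. -/
def T (a : F) : Witt2 F := ⟨a, 0⟩

omit [CharP F 2] in
/-- The sum and the product of `a` and `b` are the two Witt components of `T a + T b`, so they
determine the pair. -/
lemma T_pair {a b c d : F} (h : (T a + T b : Witt2 F) = T c + T d) :
    (a = c ∧ b = d) ∨ (a = d ∧ b = c) := by
  have hx : a + b = c + d := congrArg Witt2.x h
  have hy : a * b = c * d := by simpa [T] using congrArg Witt2.y h
  have : (a - c) * (a - d) = 0 := by linear_combination a * hx - hy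
  rcases mul_eq_zero.1 this with h1 | h1
  · have := sub_eq_zero.1 h1
    subst this
    exact Or.inl ⟨rfl, add_left_cancel hx⟩
  · have := sub_eq_zero.1 h1
    subst this
    exact Or.inr ⟨rfl, by linear_combination hx⟩

lemma T_four (hω : ∀ x y : F, x ^ 2 + x * y + y ^ 2 = 0 → x = 0 ∧ y = 0) {a b c d : F}
    (h : (T a + T b + T c + T d : Witt2 F) = 0) : b = a ∧ c = a ∧ d = a := by
  have h2 : (2 : F) = 0 := CharTwo.two_eq_zero
  have hx : a + b + c + d = 0 := congrArg Witt2.x h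
  have hy : a * b + (a + b) * c + (a + b + c) * d = 0 := by
    simpa [T] using congrArg Witt2.y h
  obtain ⟨h3, h4⟩ := hω (a + c) (b + c) (by
    linear_combination (a + b + c) * hx - hy + (c ^ 2 + a * c + b * c) * h2)
  have e1 : c = a := by linear_combination h3 - a * h2
  have e2 : b = c := by linear_combination h4 - c * h2
  subst e1
  subst e2
  exact ⟨rfl, rfl, by linear_combination hx - 2 * b * h2⟩

end Witt2

section Signs

open Witt2

variable {F : Type*} [Field F] [CharP F 2] [DecidableEq F]

/-- A signed sum of four unit vectors with zero syndrome is zero. -/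
lemma signed_four (hω : ∀ x y : F, x ^ 2 + x * y + y ^ 2 = 0 → x = 0 ∧ y = 0)
    (a b c d : F) (p q s t : ZMod 4) (hp : p = 1 ∨ p = -1) (hq : q = 1 ∨ q = -1)
    (hs : s = 1 ∨ s = -1) (ht : t = 1 ∨ t = -1) (h0 : p + (q + (s + t)) = 0)
    (h : p • T a + (q • T b + (s • T c + t • T d)) = 0) :
    p • Pi.single a (1 : ZMod 4) + (q • Pi.single b (1 : ZMod 4) +
      (s • Pi.single c (1 : ZMod 4) + t • Pi.single d (1 : ZMod 4))) = (0 : F → ZMod 4) := by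
  have key : ∀ {a b c d : F}, (T a + T b : Witt2 F) - T c - T d = 0 →
      (Pi.single a (1 : ZMod 4) + Pi.single b (1 : ZMod 4) - Pi.single c (1 : ZMod 4)
        - Pi.single d (1 : ZMod 4) : F → ZMod 4) = 0 := by
    intro a b c d h
    have h' : (T a + T b : Witt2 F) = T c + T d := by
      rw [← sub_eq_zero, ← h]
      abel
    rcases T_pair h' with ⟨rfl, rfl⟩ | ⟨rfl, rfl⟩ <;> abel
  have key4 : ∀ {a b c d : F}, (T a + T b + T c + T d : Witt2 F) = 0 →
      (Pi.single a (1 : ZMod 4) + Pi.single b (1 : ZMod 4) + Pi.single c (1 : ZMod 4)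
        + Pi.single d (1 : ZMod 4) : F → ZMod 4) = 0 := by
    intro a b c d h
    obtain ⟨rfl, rfl, rfl⟩ := T_four hω h
    simp only [← Pi.single_add]
    have : (1 + 1 + 1 + 1 : ZMod 4) = 0 := by decide
    rw [this, Pi.single_zero]
  rcases hp with rfl | rfl <;> rcases hq with rfl | rfl <;> rcases hs with rfl | rfl <;>
    rcases ht with rfl | rfl <;> first
    | exact absurd h0 (by decide)
    | simp only [one_smul, neg_smul] at h ⊢
  · rw [← key4 (a := a) (b := b) (c := c) (d := d) (by rw [← h]; abel)]
    abel
  · rw [← key (a := a) (b := b) (c := c) (d := d) (by rw [← h]; abel)]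
    abel
  · rw [← key (a := a) (b := c) (c := b) (d := d) (by rw [← h]; abel)]
    abel
  · rw [← key (a := a) (b := d) (c := b) (d := c) (by rw [← h]; abel)]
    abel
  · rw [← key (a := b) (b := c) (c := a) (d := d) (by rw [← h]; abel)]
    abel
  · rw [← key (a := b) (b := d) (c := a) (d := c) (by rw [← h]; abel)]
    abel
  · rw [← key (a := c) (b := d) (c := a) (d := b) (by rw [← h]; abel)]
    abel
  · rw [← neg_eq_zero, ← key4 (a := a) (b := b) (c := c) (d := d) (by
      rw [← neg_eq_zero, ← h]; abel)]
    abel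

omit [CharP F 2] [DecidableEq F] in
lemma T_injective {a b : F} (h : T a = T b) : a = b := congrArg Witt2.x h

/-- A signed sum of two unit vectors with zero syndrome is zero. -/
lemma signed_two (a b : F) (p q : ZMod 4) (hp : p = 1 ∨ p = -1) (hq : q = 1 ∨ q = -1)
    (h0 : p + q = 0) (h : p • T a + q • T b = 0) :
    p • Pi.single a (1 : ZMod 4) + q • Pi.single b (1 : ZMod 4) = (0 : F → ZMod 4) := by
  have hq' : q = -p := by linear_combination h0
  subst hq'
  have hab : a = b := by
    apply T_injective
    rcases hp with rfl | rfl
    · simpa [← sub_eq_add_neg, sub_eq_zero] using h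
    · simp only [neg_smul, one_smul, neg_neg] at h
      exact neg_add_eq_zero.1 h
  subst hab
  rw [neg_smul, add_neg_cancel]

end Signs

/-! ### The coloring by syndromes -/

/-- The inverse Gray map `00 ↦ 0`, `01 ↦ 1`, `11 ↦ 2`, `10 ↦ 3`. -/
def ungray (a b : ZMod 2) : ZMod 4 :=
  if a = 0 then (if b = 0 then 0 else 1) else (if b = 0 then 3 else 2)

lemma ungray_sub : ∀ a b a' b' : ZMod 2, ∃ s t : ZMod 4,
    ungray a b - ungray a' b' = s + t ∧ (a = a' → s = 0) ∧ (a ≠ a' → s = 1 ∨ s = -1) ∧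
      (b = b' → t = 0) ∧ (b ≠ b' → t = 1 ∨ t = -1) := by
  decide

lemma ungray_injective : ∀ a b a' b' : ZMod 2, ungray a b = ungray a' b' → a = a' ∧ b = b' := by
  decide

lemma cast_ungray : ∀ a b : ZMod 2,
    ZMod.castHom (by decide : 2 ∣ 4) (ZMod 2) (ungray a b) = a + b := by
  decide

section Upper

variable {F : Type} [Fintype F]

/-- The quaternary vector whose Gray image is the binary word `w`. -/
def quat (w : F × Bool → ZMod 2) (t : F) : ZMod 4 := ungray (w (t, false)) (w (t, true))

/-- The Gray map is an isometry: the quaternary difference of two words is a sum of signed unit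
vectors, one for each position in which the words differ. -/
lemma exists_signs (w w' : F × Bool → ZMod 2) : ∃ ε : F × Bool → ZMod 4,
    (∀ j, w j ≠ w' j → ε j = 1 ∨ ε j = -1) ∧
    ∀ (M : Type) [AddCommGroup M] [Module (ZMod 4) M] (f : F → M),
      ∑ t, quat w t • f t - ∑ t, quat w' t • f t =
        ∑ j ∈ univ.filter (fun j => w j ≠ w' j), ε j • f j.1 := by
  choose s t h1 h2 h3 h4 h5 using ungray_sub
  refine ⟨fun j => if j.2 then
      t (w (j.1, false)) (w (j.1, true)) (w' (j.1, false)) (w' (j.1, true))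
    else s (w (j.1, false)) (w (j.1, true)) (w' (j.1, false)) (w' (j.1, true)), ?_, ?_⟩
  · rintro ⟨a, b⟩ h
    cases b
    · simpa using h3 _ _ _ _ h
    · simpa using h5 _ _ _ _ h
  · intro M _ _ f
    rw [← sum_sub_distrib, sum_filter_of_ne, Fintype.sum_prod_type]
    · refine sum_congr rfl fun a _ => ?_
      rw [← sub_smul, quat, quat, h1]
      simp [add_smul, add_comm]
    · rintro ⟨a, b⟩ _ h hw
      apply h
      cases b
      · simp [h2 _ _ _ _ hw]
      · simp [h4 _ _ _ _ hw]

/-- Two words with equal syndromes, at even distance at most `4`, coincide. -/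
lemma eq_of_syndrome [DecidableEq F] [Field F] [CharP F 2]
    (hω : ∀ x y : F, x ^ 2 + x * y + y ^ 2 = 0 → x = 0 ∧ y = 0)
    (w w' : F × Bool → ZMod 2) (hd : hammingDist w w' ≤ 4) (he : Even (hammingDist w w'))
    (h0 : ∑ t, quat w t = ∑ t, quat w' t)
    (h1 : ∑ t, quat w t • Witt2.T t = ∑ t, quat w' t • Witt2.T t) : w = w' := by
  obtain ⟨ε, hε, hsum⟩ := exists_signs w w'
  have e0 := hsum (ZMod 4) fun _ => 1
  have e1 := hsum (Witt2 F) Witt2.T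
  have e2 := hsum (F → ZMod 4) fun t => Pi.single t 1
  simp only [smul_eq_mul, mul_one] at e0
  rw [h0, sub_self] at e0
  rw [h1, sub_self] at e1
  set D := univ.filter (fun j => w j ≠ w' j) with hD
  have hε' : ∀ j ∈ D, ε j = 1 ∨ ε j = -1 := fun j hj => hε j (mem_filter.1 hj).2
  have hcard : #D = hammingDist w w' := rfl
  have hz : ∑ j ∈ D, ε j • (Pi.single j.1 1 : F → ZMod 4) = 0 := by
    have hcases : #D = 0 ∨ #D = 2 ∨ #D = 4 := by
      obtain ⟨m, hm⟩ := he
      omega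
    clear_value D
    rcases hcases with h | h | h
    · rw [card_eq_zero] at h
      simp [h]
    · obtain ⟨j, k, hjk, rfl⟩ := card_eq_two.1 h
      rw [sum_pair hjk] at e0 e1 ⊢
      exact signed_two _ _ _ _ (hε' _ (by simp)) (hε' _ (by simp)) e0.symm e1.symm
    · obtain ⟨j, D', hj, rfl, h3⟩ := card_eq_succ.1 h
      obtain ⟨k, l, m, hkl, hkm, hlm, rfl⟩ := card_eq_three.1 h3
      have hk : k ∉ ({l, m} : Finset (F × Bool)) := by simp [hkl, hkm]
      rw [sum_insert hj, sum_insert hk, sum_pair hlm] at e0 e1 ⊢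
      exact signed_four hω _ _ _ _ _ _ _ _ (hε' _ (by simp)) (hε' _ (by simp))
        (hε' _ (by simp)) (hε' _ (by simp)) e0.symm e1.symm
  rw [hz, sub_eq_zero] at e2
  have hq : ∀ v : F × Bool → ZMod 2, ∑ t, quat v t • (Pi.single t 1 : F → ZMod 4) = quat v := by
    intro v
    ext t
    simp [Finset.sum_apply, Pi.single_apply]
  rw [hq, hq] at e2
  ext ⟨t, b⟩
  have := ungray_injective _ _ _ _ (congrFun e2 t)
  cases b
  · exact this.1
  · exact this.2

/-- The extension of `u` by its parity bit, with positions relabelled by `F × Bool`. -/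
def extend {n : ℕ} (e : Option (Fin n) ≃ F × Bool) (u : V n) (j : F × Bool) : ZMod 2 :=
  (e.symm j).elim (∑ i, u i) u

lemma sum_extend {n : ℕ} (e : Option (Fin n) ≃ F × Bool) (u : V n) : ∑ j, extend e u j = 0 := by
  rw [← e.sum_comp, Fintype.sum_option]
  simp [extend, CharTwo.add_self_eq_zero]

lemma hammingDist_extend_le {n : ℕ} (e : Option (Fin n) ≃ F × Bool) (u v : V n) :
    hammingDist (extend e u) (extend e v) ≤ hammingDist u v + 1 := by
  unfold hammingDist
  rw [card_filter, card_filter, ← e.sum_comp, Fintype.sum_option, add_comm]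
  simp only [extend, Equiv.symm_apply_apply, Option.elim]
  gcongr
  split_ifs <;> simp

lemma even_hammingDist_extend {n : ℕ} (e : Option (Fin n) ≃ F × Bool) (u v : V n) :
    Even (hammingDist (extend e u) (extend e v)) := by
  have h : ∀ a b : ZMod 2, a - b = if a ≠ b then 1 else 0 := by decide
  rw [← ZMod.natCast_eq_zero_iff_even, hammingDist, card_filter]
  push_cast
  simp_rw [← h]
  rw [sum_sub_distrib, sum_extend, sum_extend, sub_zero]

omit [Fintype F] in
lemma extend_injective {n : ℕ} (e : Option (Fin n) ≃ F × Bool) :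
    Function.Injective (extend e) := by
  intro u v h
  ext i
  simpa [extend] using congrFun h (e (some i))

lemma cast_sum_quat (w : F × Bool → ZMod 2) (hw : ∑ j, w j = 0) :
    ZMod.castHom (by decide : 2 ∣ 4) (ZMod 2) (∑ t, quat w t) = 0 := by
  rw [map_sum, ← hw, Fintype.sum_prod_type]
  refine sum_congr rfl fun t _ => ?_
  rw [quat, cast_ungray]
  simp [add_comm]

/-- The elements `0` and `2` of `ZMod 4`. -/
abbrev EvenZMod4 := {s : ZMod 4 // ZMod.castHom (by decide : 2 ∣ 4) (ZMod 2) s = 0}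

/-- The syndrome coloring of the words of length `n = 2 * |F| - 1`. -/
lemma upper_bound [Field F] [CharP F 2]
    (hω : ∀ x y : F, x ^ 2 + x * y + y ^ 2 = 0 → x = 0 ∧ y = 0) (n : ℕ)
    (hn : n + 1 = 2 * Fintype.card F) :
    ∃ Γ : V n → Fin (2 * (Fintype.card F) ^ 2),
      IsDistColoring n 4 (2 * (Fintype.card F) ^ 2) Γ := by
  classical
  have e : Option (Fin n) ≃ F × Bool := Fintype.equivOfCardEq (by simp [hn, mul_comm])
  let eW : Witt2 F ≃ F × F := ⟨fun a => (a.x, a.y), fun p => ⟨p.1, p.2⟩, fun _ => rfl, fun _ => rfl⟩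
  have hcard2 : Fintype.card EvenZMod4 = 2 := by decide
  let eC : EvenZMod4 × (F × F) ≃ Fin (2 * (Fintype.card F) ^ 2) :=
    Fintype.equivFinOfCardEq (by rw [Fintype.card_prod, hcard2, Fintype.card_prod, sq])
  refine ⟨fun u => eC (⟨∑ t, quat (extend e u) t, cast_sum_quat _ (sum_extend e u)⟩,
    eW (∑ t, quat (extend e u) t • Witt2.T t)), ?_⟩
  intro u v huv hd h
  have h' := eC.injective h
  rw [Prod.mk.injEq, Subtype.mk.injEq] at h'
  apply huv
  apply extend_injective e
  have h5 := hammingDist_extend_le e u v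
  have he := even_hammingDist_extend e u v
  refine eq_of_syndrome hω _ _ ?_ he h'.1 (eW.injective h'.2)
  obtain ⟨m, hm⟩ := he
  omega

end Upper

/-- In a finite field of characteristic `2` and odd degree, cubing is injective, so the form
`x ^ 2 + x * y + y ^ 2` is anisotropic. -/
lemma anisotropic {F : Type*} [Field F] [Fintype F] [CharP F 2] (k : ℕ)
    (hk : Fintype.card F = 3 * k + 2) (x y : F) (h : x ^ 2 + x * y + y ^ 2 = 0) :
    x = 0 ∧ y = 0 := by
  have hcube : x ^ 3 = y ^ 3 := by linear_combination (x - y) * h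
  have hpow : ∀ z : F, z = (z ^ 3) ^ k * z ^ 2 := fun z => by
    rw [← pow_mul, ← pow_add, ← hk, FiniteField.pow_card]
  have h2 : (2 : F) = 0 := CharTwo.two_eq_zero
  by_cases hx : x = 0
  · subst hx
    simpa using h
  by_cases hy : y = 0
  · subst hy
    simpa using h
  exfalso
  have ex : (y ^ 3) ^ k * x = 1 := by
    have := hpow x
    rw [hcube] at this
    apply mul_right_cancel₀ hx
    linear_combination -this
  have ey : (y ^ 3) ^ k * y = 1 := by
    apply mul_right_cancel₀ hy
    linear_combination -(hpow y)
  have hxy : x = y := by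
    apply mul_left_cancel₀ (left_ne_zero_of_mul (ex.trans_ne one_ne_zero))
    rw [ex, ey]
  subst hxy
  apply hx
  apply pow_eq_zero_iff (two_ne_zero) |>.1
  linear_combination h - x ^ 2 * h2

/-- For every odd integer `r ≥ 3`, `χ'_4(2^{r+1} − 1) = 2^{2r+1}`. -/
theorem chi'_four (r : ℕ) (hodd : Odd r) (hr : 3 ≤ r) :
    chi' 4 (2 ^ (r + 1) - 1) = 2 ^ (2 * r + 1) := by
  have hpos : 2 ≤ 2 ^ (r + 1) := by
    rw [pow_succ]
    have := Nat.one_le_two_pow (n := r)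
    omega
  obtain ⟨k, hk⟩ : ∃ k, 2 ^ r = 3 * k + 2 := by
    obtain ⟨m, rfl⟩ := hodd
    have h4 : 4 ^ m % 3 = 1 := by
      rw [Nat.pow_mod]
      simp
    refine ⟨2 * (4 ^ m / 3), ?_⟩
    rw [pow_succ, pow_mul]
    norm_num
    omega
  have hmem : 2 ^ (2 * r + 1) ∈
      {L : ℕ | ∃ Γ : V (2 ^ (r + 1) - 1) → Fin L, IsDistColoring (2 ^ (r + 1) - 1) 4 L Γ} := by
    let F := GaloisField 2 r
    let _ : Fintype F := Fintype.ofFinite F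
    have hF : Fintype.card F = 2 ^ r := by
      rw [← Nat.card_eq_fintype_card]
      exact GaloisField.card 2 r (by omega)
    have hub := upper_bound (F := F) (anisotropic k (by rw [hF, hk])) (2 ^ (r + 1) - 1)
      (by rw [hF, pow_succ]; omega)
    have e : 2 * Fintype.card F ^ 2 = 2 ^ (2 * r + 1) := by
      rw [hF]
      ring
    rw [e] at hub
    exact hub
  apply le_antisymm (Nat.sInf_le hmem)
  refine le_csInf ⟨_, hmem⟩ ?_
  rintro L ⟨Γ, hΓ⟩
  have h := lower_bound L (by rw [pow_succ, hk]; omega) (by omega) Γ hΓ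
  rw [Nat.sub_add_cancel (by omega)] at h
  have e : (2 ^ (r + 1)) ^ 2 = 2 * 2 ^ (2 * r + 1) := by ring
  rw [e] at h
  omega
end

section
/- For every odd integer r ≥ 3, the minimum number of colors in a 5-distance coloring of the hypercube of dimension 2^{r+1} satisfies χ'_5(2^{r+1}) = 4^{r+1}. -/
/-! ### The Johnson bound for codes of minimum distance five -/

/-- Over the binary alphabet, a word at distance `k` from `c` amounts to the `k`-set of
coordinates where it differs from `c`. -/
theorem card_sphere (N k : ℕ) (c : V N) :
    (Finset.univ.filter fun x : V N => hammingDist c x = k).card = N.choose k := by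
  have hb : ∀ a b d : ZMod 2, a ≠ b → a ≠ d → b = d := by decide
  have h : (Finset.powersetCard k (Finset.univ : Finset (Fin N))).card = N.choose k := by
    simp
  rw [← h]
  refine Finset.card_bij (fun x _ => Finset.univ.filter fun i => c i ≠ x i) ?_ ?_ ?_
  · intro x hx
    simp only [Finset.mem_filter, Finset.mem_univ, true_and] at hx
    simpa [Finset.mem_powersetCard, hammingDist] using hx
  · intro x _ y _ hxy
    funext i
    have := congrArg (fun s => i ∈ s) hxy
    simp only [Finset.mem_filter, Finset.mem_univ, true_and, eq_iff_iff] at this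
    by_cases hi : c i = x i
    · have h2 : c i = y i := by
        by_contra h2
        exact this.2 h2 hi
      rw [← hi, h2]
    · exact hb _ _ _ hi (this.1 hi)
  · intro S hS
    have hS' : (Finset.univ.filter fun i => c i ≠ (if i ∈ S then c i + 1 else c i)) = S := by
      ext i
      by_cases hi : i ∈ S <;> simp [hi]
    refine ⟨fun i => if i ∈ S then c i + 1 else c i, ?_, hS'⟩
    simp only [Finset.mem_filter, Finset.mem_univ, true_and]
    rw [Finset.mem_powersetCard] at hS
    exact (congrArg Finset.card hS').trans hS.2

/-- In length `3j`, at most `j` codewords lie at distance two or three from a given word `x`: the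
sets of coordinates where they differ from `x` are pairwise disjoint, and at most one of these sets
has size two. -/
theorem card_near_le {N j : ℕ} (hN : N = 3 * j) (C : Finset (V N))
    (hC : ∀ a ∈ C, ∀ b ∈ C, a ≠ b → 5 ≤ hammingDist a b) (x : V N) :
    (C.filter fun c => hammingDist c x = 2 ∨ hammingDist c x = 3).card ≤ j := by
  have hb : ∀ a b d : ZMod 2, a ≠ d → b ≠ d → a = b := by decide
  set A := C.filter fun c => hammingDist c x = 2 ∨ hammingDist c x = 3 with hA
  have hdisj : ∀ a ∈ A, ∀ b ∈ A, a ≠ b →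
      Disjoint (Finset.univ.filter fun i => a i ≠ x i) (Finset.univ.filter fun i => b i ≠ x i) := by
    intro a ha b hb' hab
    rw [Finset.disjoint_left]
    intro i hia hib
    simp only [hA, Finset.mem_filter] at ha hb'
    have h5 := hC a ha.1 b hb'.1 hab
    have hsub : (Finset.univ.filter fun k => a k ≠ b k) ⊆
        ((Finset.univ.filter fun k => a k ≠ x k).erase i) ∪
        ((Finset.univ.filter fun k => b k ≠ x k).erase i) := by
      intro k hk
      simp only [Finset.mem_filter, Finset.mem_univ, true_and, Finset.mem_union,
        Finset.mem_erase] at hk hia hib ⊢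
      have hki : k ≠ i := by
        rintro rfl
        exact hk (hb _ _ _ hia hib)
      by_cases h1 : a k = x k
      · right
        exact ⟨hki, fun h2 => hk (h1.trans h2.symm)⟩
      · exact Or.inl ⟨hki, h1⟩
    have h1 := (Finset.card_le_card hsub).trans (Finset.card_union_le _ _)
    rw [Finset.card_erase_of_mem hia, Finset.card_erase_of_mem hib] at h1
    have e1 : hammingDist a b = (Finset.univ.filter fun k => a k ≠ b k).card := rfl
    have e2 : hammingDist a x = (Finset.univ.filter fun k => a k ≠ x k).card := rfl
    have e3 : hammingDist b x = (Finset.univ.filter fun k => b k ≠ x k).card := rfl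
    omega
  have hsum : ∑ a ∈ A, hammingDist a x ≤ N := by
    have := Finset.card_biUnion hdisj
    have h2 := Finset.card_le_univ (A.biUnion fun a => Finset.univ.filter fun i => a i ≠ x i)
    rw [this, Fintype.card_fin] at h2
    exact h2
  have htwo : (A.filter fun c => hammingDist c x = 2).card ≤ 1 := by
    rw [Finset.card_le_one]
    intro a ha b hb'
    by_contra hab
    simp only [hA, Finset.mem_filter] at ha hb'
    have h5 := hC a ha.1.1 b hb'.1.1 hab
    have := hammingDist_triangle_right a b x
    omega
  have h3 : 3 * A.card = ∑ a ∈ A, hammingDist a x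
      + (A.filter fun c => hammingDist c x = 2).card := by
    rw [Finset.card_filter (fun c => hammingDist c x = 2) A, ← Finset.sum_add_distrib, mul_comm,
      ← smul_eq_mul, ← Finset.sum_const]
    refine Finset.sum_congr rfl fun a ha => ?_
    simp only [hA, Finset.mem_filter] at ha
    rcases ha.2 with h | h <;> simp [h]
  omega

/-- Each word `x` receives total weight at most `j`, where a codeword sends weight `j` to the words
at distance at most one and weight `1` to those at distance two or three. -/
theorem weight_le {N j : ℕ} (hN : N = 3 * j) (C : Finset (V N))
    (hC : ∀ a ∈ C, ∀ b ∈ C, a ≠ b → 5 ≤ hammingDist a b) (x : V N) :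
    j * (C.filter fun c => hammingDist c x = 0 ∨ hammingDist c x = 1).card +
      (C.filter fun c => hammingDist c x = 2 ∨ hammingDist c x = 3).card ≤ j := by
  by_cases h : ∃ c ∈ C, hammingDist c x = 0 ∨ hammingDist c x = 1
  · obtain ⟨c, hc, hcx⟩ := h
    have h1 : (C.filter fun c => hammingDist c x = 0 ∨ hammingDist c x = 1).card ≤ 1 := by
      rw [Finset.card_le_one]
      intro a ha b hb
      by_contra hab
      simp only [Finset.mem_filter] at ha hb
      have h5 := hC a ha.1 b hb.1 hab
      have := hammingDist_triangle_right a b x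
      omega
    have h2 : (C.filter fun c => hammingDist c x = 2 ∨ hammingDist c x = 3) = ∅ := by
      rw [Finset.filter_eq_empty_iff]
      intro b hb hbx
      have hcb : c ≠ b := by
        rintro rfl
        omega
      have h5 := hC c hc b hb hcb
      have := hammingDist_triangle_right c b x
      omega
    rw [h2, Finset.card_empty, add_zero]
    exact (Nat.mul_le_mul_left j h1).trans (by omega)
  · have h1 : (C.filter fun c => hammingDist c x = 0 ∨ hammingDist c x = 1) = ∅ := by
      rw [Finset.filter_eq_empty_iff]
      exact fun b hb hbx => h ⟨b, hb, hbx⟩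
    rw [h1, Finset.card_empty, mul_zero, zero_add]
    exact card_near_le hN C hC x

theorem card_two_spheres (N k l : ℕ) (hkl : k ≠ l) (c : V N) :
    (Finset.univ.filter fun x : V N => hammingDist c x = k ∨ hammingDist c x = l).card
      = N.choose k + N.choose l := by
  rw [Finset.filter_or, Finset.card_union_of_disjoint, card_sphere, card_sphere]
  rw [Finset.disjoint_filter]
  intro x _ h1 h2
  exact hkl (h1.symm.trans h2)

/-- The Johnson bound for minimum distance five, in lengths divisible by three. -/
theorem card_code_le {N j : ℕ} (hN : N = 3 * j) (hj : 0 < j) (C : Finset (V N))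
    (hC : ∀ a ∈ C, ∀ b ∈ C, a ≠ b → 5 ≤ hammingDist a b) :
    C.card * (N + 1) ^ 2 ≤ 2 ^ (N + 1) := by
  have h1 := Finset.sum_le_sum fun x (_ : x ∈ (Finset.univ : Finset (V N))) => weight_le hN C hC x
  have hcount : ∀ p : ℕ → Prop, ∀ _ : DecidablePred p,
      ∑ x : V N, (C.filter fun c => p (hammingDist c x)).card
        = ∑ c ∈ C, (Finset.univ.filter fun x : V N => p (hammingDist c x)).card := by
    intro p _
    simp only [Finset.card_filter]
    exact Finset.sum_comm
  have hc1 := hcount (fun d => d = 0 ∨ d = 1) inferInstance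
  have hc2 := hcount (fun d => d = 2 ∨ d = 3) inferInstance
  rw [Finset.sum_add_distrib, ← Finset.mul_sum, hc1, hc2] at h1
  simp only [card_two_spheres N 0 1 (by decide), card_two_spheres N 2 3 (by decide),
    Finset.sum_const, smul_eq_mul, Finset.card_univ, Fintype.card_fun, ZMod.card,
    Fintype.card_fin, Nat.choose_zero_right, Nat.choose_one_right] at h1
  -- The weight sent out by one codeword is `j * (N + 1) ^ 2 / 2`.
  have hw : 2 * (j * (1 + N) + (N.choose 2 + N.choose 3)) = j * (N + 1) ^ 2 := by
    have e3 : N.choose 2 + N.choose 3 = (N + 1).choose 3 := rfl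
    have e4 : (N + 1).choose 3 * 6 = (N + 1) * N * (N - 1) := by
      have := Nat.descFactorial_eq_factorial_mul_choose (N + 1) 3
      simp [Nat.descFactorial, Nat.factorial] at this
      rw [mul_comm, ← this]
      ring
    obtain ⟨i, rfl⟩ : ∃ i, j = i + 1 := ⟨j - 1, by omega⟩
    have e5 : N - 1 = 3 * i + 2 := by omega
    rw [e3]
    rw [e5] at e4
    subst hN
    nlinarith
  refine Nat.le_of_mul_le_mul_left ?_ hj
  calc j * (C.card * (N + 1) ^ 2) = 2 * (j * (C.card * (1 + N))
          + C.card * (N.choose 2 + N.choose 3)) := by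
        rw [mul_left_comm, ← hw]
        ring
    _ ≤ 2 * (2 ^ N * j) := Nat.mul_le_mul_left 2 h1
    _ = j * 2 ^ (N + 1) := by ring

/-- Deleting one coordinate from a color class leaves a code of minimum distance five. -/
theorem sq_le_of_coloring {N j L : ℕ} (hN : N = 3 * j) (hj : 0 < j) (Γ : V (N + 1) → Fin L)
    (hΓ : IsDistColoring (N + 1) 5 L Γ) : (N + 1) ^ 2 ≤ L := by
  have hd : ∀ u v : V (N + 1), hammingDist u v ≤ hammingDist (Fin.tail u) (Fin.tail v) + 1 := by
    intro u v
    unfold hammingDist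
    rw [Finset.card_filter, Finset.card_filter, Fin.sum_univ_succ, add_comm]
    refine Nat.add_le_add_left ?_ _
    split_ifs <;> omega
  have hfib : ∀ l : Fin L,
      (Finset.univ.filter fun u => Γ u = l).card * (N + 1) ^ 2 ≤ 2 ^ (N + 1) := by
    intro l
    have hsep : ∀ u v : V (N + 1), Γ u = l → Γ v = l → u ≠ v →
        5 ≤ hammingDist (Fin.tail u) (Fin.tail v) := by
      intro u v hu hv huv
      by_contra h
      exact hΓ u v huv ((hd u v).trans (by omega)) (hu.trans hv.symm)
    have hinj : Set.InjOn (fun u : V (N + 1) => (Fin.tail u : V N))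
        (Finset.univ.filter fun u => Γ u = l) := by
      intro u hu v hv huv
      simp only [Finset.coe_filter, Finset.mem_univ, true_and, Set.mem_ofPred_eq] at hu hv huv
      by_contra hne
      have := hsep u v hu hv hne
      rw [huv, hammingDist_self] at this
      omega
    rw [← Finset.card_image_of_injOn hinj]
    refine card_code_le hN hj _ ?_
    intro a ha b hb hab
    simp only [Finset.mem_image, Finset.mem_filter, Finset.mem_univ, true_and] at ha hb
    obtain ⟨u, hu, rfl⟩ := ha
    obtain ⟨v, hv, rfl⟩ := hb
    exact hsep u v hu hv (by rintro rfl; exact hab rfl)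
  have htot : ∑ l : Fin L, (Finset.univ.filter fun u => Γ u = l).card = 2 ^ (N + 1) := by
    rw [← Finset.card_eq_sum_card_fiberwise (fun _ _ => Finset.mem_coe.2 (Finset.mem_univ _))]
    simp
  have h := Finset.sum_le_sum fun l (_ : l ∈ (Finset.univ : Finset (Fin L))) => hfib l
  rw [← Finset.sum_mul, htot, Finset.sum_const, Finset.card_univ, Fintype.card_fin,
    smul_eq_mul, mul_comm L] at h
  exact Nat.le_of_mul_le_mul_left h (by positivity)

/-! ### Length-two Witt vectors -/

/-- The additive group with underlying set `R × R` and addition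
`(a, b) + (a', b') = (a + a', b + b' + a * a')`. When `R` is a field of characteristic two this is
the additive group of the Witt vectors of length two over `R` (for a finite field, of a Galois ring
of characteristic four), with `(a, 0)` the Teichmüller representative of `a`. -/
@[ext] structure W2 (R : Type*) where
  /-- The residue. -/
  fst : R
  /-- The second Witt component. -/
  snd : R

namespace W2

variable {R : Type*} [CommRing R]

instance : Add (W2 R) := ⟨fun x y => ⟨x.fst + y.fst, x.snd + y.snd + x.fst * y.fst⟩⟩
instance : Zero (W2 R) := ⟨⟨0, 0⟩⟩
instance : Neg (W2 R) := ⟨fun x => ⟨-x.fst, -x.snd + x.fst ^ 2⟩⟩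

@[simp] theorem add_fst (x y : W2 R) : (x + y).fst = x.fst + y.fst := rfl
@[simp] theorem add_snd (x y : W2 R) : (x + y).snd = x.snd + y.snd + x.fst * y.fst := rfl
@[simp] theorem zero_fst : (0 : W2 R).fst = 0 := rfl
@[simp] theorem zero_snd : (0 : W2 R).snd = 0 := rfl
@[simp] theorem neg_fst (x : W2 R) : (-x).fst = -x.fst := rfl
@[simp] theorem neg_snd (x : W2 R) : (-x).snd = -x.snd + x.fst ^ 2 := rfl

instance : AddCommGroup (W2 R) where
  add_assoc x y z := by ext <;> simp <;> ring
  zero_add x := by ext <;> simp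
  add_zero x := by ext <;> simp
  add_comm x y := by ext <;> simp <;> ring
  neg_add_cancel x := by ext <;> simp; ring
  nsmul := nsmulRec
  zsmul := zsmulRec

/-- The Teichmüller representative. -/
def teich (a : R) : W2 R := ⟨a, 0⟩

@[simp] theorem teich_fst (a : R) : (teich a).fst = a := rfl
@[simp] theorem teich_snd (a : R) : (teich a).snd = 0 := rfl

theorem four_nsmul [CharP R 2] (x : W2 R) : 4 • x = 0 := by
  have h2 : (2 : R) = 0 := CharP.cast_eq_zero R 2
  rw [show (4 : ℕ) = 2 * 2 from rfl, mul_nsmul, two_nsmul, two_nsmul]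
  ext
  · simp only [add_fst, zero_fst]
    linear_combination 2 * x.fst * h2
  · simp only [add_snd, add_fst, zero_snd]
    linear_combination (2 * x.snd + 3 * x.fst ^ 2) * h2

instance [CharP R 2] : Module (ZMod 4) (W2 R) := AddCommGroup.zmodModule four_nsmul

/-- The underlying pair. -/
def equivProd : W2 R ≃ R × R where
  toFun x := (x.fst, x.snd)
  invFun p := ⟨p.1, p.2⟩
  left_inv _ := rfl
  right_inv _ := rfl

end W2

/-! ### Quaternary words and their syndromes -/

section SignedUnit

variable {F : Type*} [DecidableEq F]

/-- The signed unit vector at `t`, with sign `-1` when the flag is `false`. -/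
def signedUnit (p : F × Bool) : F → ZMod 4 := Pi.single p.1 (if p.2 then 1 else -1)

theorem signedUnit_false (t : F) : signedUnit (t, false) = -signedUnit (t, true) := by
  simp [signedUnit, Pi.single_neg]

theorem signed_four_s1 (t : F) :
    signedUnit (t, true) + signedUnit (t, true) + signedUnit (t, true) + signedUnit (t, true)
      = 0 := by
  simp only [signedUnit, if_true, ← Pi.single_add]
  rw [show (1 + 1 + 1 + 1 : ZMod 4) = 0 from by decide, Pi.single_zero]

end SignedUnit

section Syndrome

variable {F : Type*} [Field F]

theorem teich_inj {s t : F} (h : W2.teich s = W2.teich t) : s = t := congrArg W2.fst h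

/-- The pair `{s, t}` is determined by its sum and its product. -/
theorem teich_two_two {s t u v : F}
    (h : W2.teich s + W2.teich t = W2.teich u + W2.teich v) :
    (s = u ∧ t = v) ∨ (s = v ∧ t = u) := by
  have h1 := congrArg W2.fst h
  have h2 := congrArg W2.snd h
  simp at h1 h2
  have h3 : (s - u) * (s - v) = 0 := by linear_combination s * h1 - h2
  rcases mul_eq_zero.1 h3 with h | h
  · have : s = u := sub_eq_zero.1 h
    subst this
    exact Or.inl ⟨rfl, by simpa using h1⟩
  · have : s = v := sub_eq_zero.1 h
    subst this
    exact Or.inr ⟨rfl, by linear_combination h1⟩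

/-- With `σ = s + t = u + v` and `w = s + u`, the relation says `w ^ 2 + w * σ + σ ^ 2 = 0`. -/
theorem teich_four [CharP F 2] (hF : ∀ y : F, y ^ 2 + y + 1 ≠ 0) {s t u v : F}
    (h : W2.teich s + W2.teich t + W2.teich u + W2.teich v = 0) :
    s = t ∧ s = u ∧ s = v := by
  have c2 : (2 : F) = 0 := CharP.cast_eq_zero F 2
  have h1 := congrArg W2.fst h
  have h2 := congrArg W2.snd h
  simp at h1 h2
  have hv : v = s + t + u := by linear_combination h1 - (s + t + u) * c2
  subst hv
  have key : (s + u) ^ 2 + (s + u) * (s + t) + (s + t) ^ 2 = 0 := by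
    linear_combination h2 + (s ^ 2 + s * u + t * s) * c2 - (s * t + s * u + t * u) * c2
  have hst : s + t = 0 := by
    by_contra hne
    apply hF ((s + u) / (s + t))
    field_simp
    linear_combination key
  have hsu : s + u = 0 := by
    rw [hst] at key
    simpa using key
  have hs : s = t := by linear_combination hst - t * c2
  have hu : s = u := by linear_combination hsu - u * c2
  exact ⟨hs, hu, by subst hs hu; linear_combination -s * c2⟩

variable [CharP F 2] [Fintype F] [DecidableEq F]

/-- The syndrome of a quaternary word indexed by `F`, for the parity checks `1` and
`W2.teich t`. Its kernel is the quaternary Preparata code. -/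
def syndrome : (F → ZMod 4) →+ ZMod 4 × W2 F where
  toFun c := ∑ t, c t • (1, W2.teich t)
  map_zero' := by simp
  map_add' c d := by simp only [Pi.add_apply, add_smul, Finset.sum_add_distrib]

theorem syndrome_single (t : F) (ε : ZMod 4) :
    syndrome (Pi.single t ε) = (ε, ε • W2.teich t) := by
  change ∑ s, (Pi.single t ε : F → ZMod 4) s • ((1 : ZMod 4), W2.teich s) = _
  rw [Finset.sum_eq_single t]
  · simp
  · intro s _ hs
    simp [hs]
  · simp

theorem syndrome_signedUnit (t : F) (b : Bool) :
    syndrome (signedUnit (t, b)) =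
      (if b then 1 else -1, if b then W2.teich t else -W2.teich t) := by
  rw [signedUnit, syndrome_single]
  cases b <;> simp

/-- A sum of at most five signed unit vectors with zero syndrome vanishes, that is, the kernel of
the syndrome has minimum Lee distance at least six. The first parity check rules out an odd number
of terms and leaves, for four terms, equal signs or two of each sign. -/
theorem sum_signedUnit_eq_zero (hF : ∀ y : F, y ^ 2 + y + 1 ≠ 0) (l : List (F × Bool))
    (hl : l.length ≤ 5) (h : syndrome (l.map signedUnit).sum = 0) :
    (l.map signedUnit).sum = 0 := by
  have odd1 : ∀ p : Bool, (if p then 1 else -1 : ZMod 4) ≠ 0 := by decide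
  have odd3 : ∀ p q r : Bool, (if p then 1 else -1 : ZMod 4) +
      ((if q then 1 else -1) + (if r then 1 else -1)) ≠ 0 := by decide
  have odd5 : ∀ p q r s t : Bool, (if p then 1 else -1 : ZMod 4) + ((if q then 1 else -1) +
      ((if r then 1 else -1) + ((if s then 1 else -1) + (if t then 1 else -1)))) ≠ 0 := by decide
  have two : ∀ s t u v : F,
      W2.teich s + W2.teich t + (-W2.teich u + -W2.teich v) = 0 →
      signedUnit (s, true) + signedUnit (t, true)
        + (-signedUnit (u, true) + -signedUnit (v, true)) = 0 := by
    intro s t u v h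
    rw [← neg_add, ← sub_eq_add_neg, sub_eq_zero] at h ⊢
    rcases teich_two_two h with ⟨rfl, rfl⟩ | ⟨rfl, rfl⟩
    · rfl
    · exact add_comm _ _
  have four : ∀ s t u v : F, W2.teich s + W2.teich t + W2.teich u + W2.teich v = 0 →
      signedUnit (s, true) + signedUnit (t, true) + signedUnit (u, true)
        + signedUnit (v, true) = 0 := by
    intro s t u v h
    obtain ⟨rfl, rfl, rfl⟩ := teich_four hF h
    exact signed_four_s1 s
  match l, hl with
  | [], _ => rfl
  | [(a, p)], _ =>
    simp only [List.map_cons, List.map_nil, List.sum_cons, List.sum_nil, add_zero,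
      syndrome_signedUnit, Prod.mk_eq_zero] at h
    exact absurd h.1 (odd1 p)
  | [(a, p), (b, q)], _ =>
    simp only [List.map_cons, List.map_nil, List.sum_cons, List.sum_nil, add_zero, map_add,
      syndrome_signedUnit, Prod.mk_add_mk, Prod.mk_eq_zero] at h ⊢
    rcases p <;> rcases q <;> first | exact absurd h.1 (by decide) | skip
    all_goals
      simp only [Bool.false_eq_true, if_true, if_false, signedUnit_false] at h ⊢
    · rw [teich_inj (neg_add_eq_zero.1 h.2), neg_add_cancel]
    · rw [teich_inj (add_neg_eq_zero.1 h.2), add_neg_cancel]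
  | [(a, p), (b, q), (c, r)], _ =>
    simp only [List.map_cons, List.map_nil, List.sum_cons, List.sum_nil, add_zero, map_add,
      syndrome_signedUnit, Prod.mk_add_mk, Prod.mk_eq_zero] at h
    exact absurd h.1 (odd3 p q r)
  | [(a, p), (b, q), (c, r), (d, s)], _ =>
    simp only [List.map_cons, List.map_nil, List.sum_cons, List.sum_nil, add_zero, map_add,
      syndrome_signedUnit, Prod.mk_add_mk, Prod.mk_eq_zero] at h ⊢
    rcases p <;> rcases q <;> rcases r <;> rcases s <;>
      first | exact absurd h.1 (by decide) | skip
    all_goals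
      simp only [Bool.false_eq_true, if_true, if_false, signedUnit_false] at h ⊢
      replace h := h.2
      first
      | exact Eq.trans (by abel1) (two a b c d (Eq.trans (by abel1) h))
      | exact Eq.trans (by abel1) (two a c b d (Eq.trans (by abel1) h))
      | exact Eq.trans (by abel1) (two a d b c (Eq.trans (by abel1) h))
      | exact Eq.trans (by abel1) (two b c a d (Eq.trans (by abel1) h))
      | exact Eq.trans (by abel1) (two b d a c (Eq.trans (by abel1) h))
      | exact Eq.trans (by abel1) (two c d a b (Eq.trans (by abel1) h))
      | exact Eq.trans (by abel1) (four a b c d (Eq.trans (by abel1) h))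
      | exact neg_eq_zero.1 (Eq.trans (by abel1)
          (four a b c d (neg_eq_zero.1 (Eq.trans (by abel1) h))))
  | [(a, p), (b, q), (c, r), (d, s), (e, t)], _ =>
    simp only [List.map_cons, List.map_nil, List.sum_cons, List.sum_nil, add_zero, map_add,
      syndrome_signedUnit, Prod.mk_add_mk, Prod.mk_eq_zero] at h
    exact absurd h.1 (odd5 p q r s t)
  | _ :: _ :: _ :: _ :: _ :: _ :: l, hl =>
    simp only [List.length_cons] at hl
    omega

end Syndrome

/-! ### The Gray map and the coloring -/

/-- The inverse of `gray`. -/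
def grayInv (a b : ZMod 2) : ZMod 4 :=
  if a = 0 then (if b = 0 then 0 else 1) else (if b = 0 then 3 else 2)

section GrayWord

variable {F : Type*} {n : ℕ} (e : Fin n ≃ F × Bool)

/-- The quaternary word obtained from a binary word by reading its letters in pairs, the pairing of
the coordinates being given by `e`. -/
def grayWord (u : V n) (t : F) : ZMod 4 :=
  grayInv (u (e.symm (t, false))) (u (e.symm (t, true)))

theorem grayWord_injective : Function.Injective (grayWord e) := by
  have hinj : ∀ a b a' b' : ZMod 2, grayInv a b = grayInv a' b' → a = a' ∧ b = b' := by decide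
  intro u v h
  funext i
  obtain ⟨⟨t, b⟩, rfl⟩ := e.symm.surjective i
  have := hinj _ _ _ _ (congrFun h t)
  cases b
  · exact this.1
  · exact this.2

variable [DecidableEq F]

/-- Changing one letter of a binary word changes its quaternary word by a signed unit vector. -/
theorem grayWord_flip (u v : V n) (i : Fin n) (hi : u i ≠ v i) (h : ∀ k, k ≠ i → u k = v k) :
    ∃ p, grayWord e u - grayWord e v = signedUnit p := by
  have h0 : ∀ a a' b : ZMod 2, a ≠ a' →
      ∃ s : Bool, grayInv a b - grayInv a' b = if s then 1 else -1 := by decide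
  have h1 : ∀ a b b' : ZMod 2, b ≠ b' →
      ∃ s : Bool, grayInv a b - grayInv a b' = if s then 1 else -1 := by decide
  obtain ⟨⟨t, b⟩, rfl⟩ := e.symm.surjective i
  have hoff : ∀ s, s ≠ t → ∀ c, u (e.symm (s, c)) = v (e.symm (s, c)) := by
    intro s hs c
    apply h
    intro hh
    exact hs (congrArg Prod.fst (e.symm.injective hh))
  have hs : ∃ s : Bool, grayWord e u t - grayWord e v t = if s then 1 else -1 := by
    cases b
    · have hc : u (e.symm (t, true)) = v (e.symm (t, true)) := h _ (by simp)
      simp only [grayWord, hc]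
      exact h0 _ _ _ hi
    · have hc : u (e.symm (t, false)) = v (e.symm (t, false)) := h _ (by simp)
      simp only [grayWord, hc]
      exact h1 _ _ _ hi
  obtain ⟨s, hs⟩ := hs
  refine ⟨(t, s), ?_⟩
  funext k
  by_cases hk : k = t
  · subst hk
    simpa [signedUnit] using hs
  · simp [signedUnit, hk, grayWord, hoff k hk]

theorem grayWord_sub (k : ℕ) : ∀ u v : V n, hammingDist u v = k →
    ∃ l : List (F × Bool), l.length = k ∧
      grayWord e u - grayWord e v = (l.map signedUnit).sum := by
  induction k with
  | zero =>
    intro u v h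
    rw [hammingDist_eq_zero] at h
    exact ⟨[], rfl, by simp [h]⟩
  | succ k ih =>
    intro u v h
    obtain ⟨i, hi⟩ : ∃ i, u i ≠ v i := by
      by_contra! hc
      rw [funext hc, hammingDist_self] at h
      omega
    have hset : (Finset.univ.filter fun j => Function.update u i (v i) j ≠ v j)
        = (Finset.univ.filter fun j => u j ≠ v j).erase i := by
      ext j
      by_cases hj : j = i
      · subst hj
        simp
      · simp [hj]
    have hd : hammingDist (Function.update u i (v i)) v = k := by
      unfold hammingDist at h ⊢
      rw [hset, Finset.card_erase_of_mem (by simpa using hi), h]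
      rfl
    obtain ⟨l, hl, hs⟩ := ih _ v hd
    obtain ⟨p, hp⟩ := grayWord_flip e u (Function.update u i (v i)) i (by simpa using hi)
      (fun j hj => by simp [hj])
    refine ⟨p :: l, by simp [hl], ?_⟩
    rw [List.map_cons, List.sum_cons, ← hs, ← hp]
    abel

end GrayWord

/-- A field of order `2 ^ r` with `r` odd contains no primitive cube root of unity. -/
theorem no_cube_root {F : Type*} [Field F] [CharP F 2] [Fintype F] {r : ℕ} (hr : Odd r)
    (hF : Fintype.card F = 2 ^ r) (y : F) : y ^ 2 + y + 1 ≠ 0 := by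
  intro h
  have c2 : (2 : F) = 0 := CharP.cast_eq_zero F 2
  have h3 : y ^ 3 = 1 := by linear_combination (y - 1) * h
  obtain ⟨m, hm⟩ : ∃ m, 2 ^ r = 3 * m + 2 := by
    obtain ⟨k, rfl⟩ := hr
    have hm : (2 ^ (2 * k + 1)) % 3 = 2 := by
      rw [pow_succ, pow_mul, Nat.mul_mod, Nat.pow_mod]
      simp
    have hd := Nat.div_add_mod (2 ^ (2 * k + 1)) 3
    rw [hm] at hd
    exact ⟨_, hd.symm⟩
  have hy := FiniteField.pow_card y
  rw [hF, hm, pow_add, pow_mul, h3, one_pow, one_mul] at hy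
  have : (1 : F) = 0 := by linear_combination h - hy - y * c2
  exact one_ne_zero this

/-- The syndrome of the quaternary word is a `5`-distance coloring. -/
theorem exists_coloring {r : ℕ} (hr : Odd r) :
    ∃ Γ : V (2 ^ (r + 1)) → Fin (4 ^ (r + 1)),
      IsDistColoring (2 ^ (r + 1)) 5 (4 ^ (r + 1)) Γ := by
  classical
  have hr0 : r ≠ 0 := by
    rintro rfl
    simp at hr
  have hcard : Nat.card (GaloisField 2 r) = 2 ^ r := GaloisField.card 2 r hr0
  let F := GaloisField 2 r
  let _ : Fintype F := Fintype.ofFinite F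
  have hF : Fintype.card F = 2 ^ r := by rw [← hcard, Nat.card_eq_fintype_card]
  have e : Fin (2 ^ (r + 1)) ≃ F × Bool :=
    (Fintype.equivFinOfCardEq (by simp [hF, pow_succ])).symm
  have f : ZMod 4 × W2 F ≃ Fin (4 ^ (r + 1)) :=
    (Equiv.prodCongr (Equiv.refl _) W2.equivProd).trans (Fintype.equivFinOfCardEq (by
      simp only [Fintype.card_prod, ZMod.card, hF]
      rw [← mul_pow, pow_succ]
      ring))
  refine ⟨fun u => f (syndrome (grayWord e u)), fun u v huv hd hc => huv ?_⟩
  obtain ⟨l, hl, hs⟩ := grayWord_sub e _ u v rfl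
  have h0 := sum_signedUnit_eq_zero (no_cube_root hr hF) l (hl.trans_le hd)
    (by rw [← hs, map_sub, sub_eq_zero]; exact f.injective hc)
  rw [← hs, sub_eq_zero] at h0
  exact grayWord_injective e h0

/-! ### The minimum number of colors -/

/-- For every odd integer `r ≥ 3`, `χ'_5(2^{r+1}) = 4^{r+1}`. -/
theorem chi'_five (r : ℕ) (hodd : Odd r) (hr : 3 ≤ r) :
    chi' 5 (2 ^ (r + 1)) = 4 ^ (r + 1) := by
  refine le_antisymm (Nat.sInf_le (exists_coloring hodd)) ?_
  refine le_csInf ⟨_, exists_coloring hodd⟩ ?_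
  rintro L ⟨Γ, hΓ⟩
  -- Since `r + 1` is even, `2 ^ (r + 1) - 1` is a multiple of three.
  obtain ⟨j, hj⟩ : ∃ j, 2 ^ (r + 1) = 3 * j + 1 := by
    obtain ⟨k, rfl⟩ := hodd
    have hm : (2 ^ (2 * k + 1 + 1)) % 3 = 1 := by
      rw [show 2 * k + 1 + 1 = 2 * (k + 1) by ring, pow_mul, Nat.pow_mod]
      simp
    have hd := Nat.div_add_mod (2 ^ (2 * k + 1 + 1)) 3
    rw [hm] at hd
    exact ⟨_, hd.symm⟩
  have hj0 : 0 < j := by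
    have : 2 ^ 1 < 2 ^ (r + 1) := Nat.pow_lt_pow_right (by norm_num) (by omega)
    omega
  have h4 : 4 ^ (r + 1) = (2 ^ (r + 1)) ^ 2 := by
    rw [← pow_mul, mul_comm, pow_mul]
    norm_num
  rw [h4]
  generalize 2 ^ (r + 1) = n at Γ hΓ hj ⊢
  subst hj
  exact sq_le_of_coloring rfl hj0 Γ hΓ
end

section
/- For every even integer d with 2 ≤ d ≤ n, one has χ_d(n) ≤ 2^{⌈log_2(1 + C(n−1, d−1))⌉}, where C(n−1, d−1) is the binomial coefficient and ⌈x⌉ denotes the least integer not less than x. -/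
/-- Greedy choice of columns: as long as the number of `d`-subsets of the first `n - 1` indices is
smaller than the group, `n` elements can be chosen no `d + 1` of which sum to zero. -/
lemma exists_no_zero_sum {W : Type*} [AddCommGroup W] [Fintype W] (d n : ℕ)
    (hW : Nat.choose (n - 1) d < Fintype.card W) :
    ∃ h : ℕ → W, ∀ s ⊆ Finset.range n, s.card = d + 1 → ∑ i ∈ s, h i ≠ 0 := by
  classical
  induction n with
  | zero =>
    refine ⟨0, fun s hs hc => ?_⟩
    simp only [Finset.range_zero, Finset.subset_empty] at hs
    simp [hs] at hc
  | succ n ih =>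
    obtain ⟨h, hh⟩ := ih (lt_of_le_of_lt (Nat.choose_le_choose d (by omega)) hW)
    let B : Finset W :=
      ((Finset.range n).powersetCard d).image fun t => -∑ i ∈ t, h i
    have hB : B.card < Fintype.card W := by
      refine lt_of_le_of_lt Finset.card_image_le ?_
      simpa using hW
    obtain ⟨w, hw⟩ : ∃ w, w ∉ B := by
      by_contra! hall
      exact hB.ne (by rw [Finset.eq_univ_of_forall hall, Finset.card_univ])
    have hold : ∀ t : Finset ℕ, n ∉ t → ∑ i ∈ t, Function.update h n w i = ∑ i ∈ t, h i :=
      fun t ht => Finset.sum_congr rfl fun i hi =>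
        Function.update_of_ne (ne_of_mem_of_not_mem hi ht) _ _
    refine ⟨Function.update h n w, fun s hs hc h0 => ?_⟩
    by_cases hn : n ∈ s
    · rw [← Finset.add_sum_erase s _ hn, hold _ (Finset.notMem_erase n s),
        Function.update_self] at h0
      refine hw (Finset.mem_image.2 ⟨s.erase n, Finset.mem_powersetCard.2 ⟨?_, ?_⟩,
        (eq_neg_of_add_eq_zero_left h0).symm⟩)
      · intro i hi
        have h1 := Finset.mem_erase.1 hi
        have h2 := Finset.mem_range.1 (hs h1.2)
        exact Finset.mem_range.2 (by omega)
      · rw [Finset.card_erase_of_mem hn, hc, Nat.add_sub_cancel]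
    · rw [hold s hn] at h0
      refine hh s (fun i hi => ?_) hc h0
      have h2 := Finset.mem_range.1 (hs hi)
      have h3 : i ≠ n := fun e => hn (e ▸ hi)
      exact Finset.mem_range.2 (by omega)

/-- For even `d` with `2 ≤ d ≤ n`, `χ_d(n) ≤ 2^{⌈log₂(1 + C(n−1, d−1))⌉}`. -/
theorem chi_le_pow_clog (n d : ℕ) (hd : Even d) (hd2 : 2 ≤ d) (hdn : d ≤ n) :
    chi d n ≤ 2 ^ Nat.clog 2 (1 + Nat.choose (n - 1) (d - 1)) := by
  classical
  set m := Nat.clog 2 (1 + Nat.choose (n - 1) (d - 1)) with hm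
  have hcard : Fintype.card (Fin m → ZMod 2) = 2 ^ m := by simp
  obtain ⟨h, hh⟩ := exists_no_zero_sum (W := Fin m → ZMod 2) (d - 1) n (by
    have := Nat.le_pow_clog (b := 2) (by norm_num) (1 + Nat.choose (n - 1) (d - 1))
    rw [hcard]
    rw [← hm] at this
    omega)
  let e : (Fin m → ZMod 2) ≃ Fin (2 ^ m) := Fintype.equivFinOfCardEq hcard
  refine Nat.sInf_le ⟨fun u => e (∑ i : Fin n, u i • h i), fun u v huv heq => ?_⟩
  let S : Finset (Fin n) := {i | u i ≠ v i}
  -- Over `ZMod 2`, the difference of two words is the indicator of the set where they differ.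
  have hdiff : ∀ a b : ZMod 2, a - b = if a ≠ b then 1 else 0 := by decide
  have hsum : ∑ i ∈ S, h i = 0 := by
    have h1 := sub_eq_zero.2 (e.injective heq)
    rw [← Finset.sum_sub_distrib] at h1
    simp only [← sub_smul, hdiff, ite_smul, one_smul, zero_smul] at h1
    rwa [← Finset.sum_filter] at h1
  have hSc : S.card = d := huv
  refine hh (S.map Fin.valEmbedding) (fun i hi => ?_) ?_ ?_
  · obtain ⟨j, -, rfl⟩ := Finset.mem_map.1 hi
    exact Finset.mem_range.2 j.isLt
  · rw [Finset.card_map]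
    omega
  · rw [Finset.sum_map]
    exact hsum
end

section
/- If d is an even positive integer and n ≥ 2d, then χ_d(n) ≤ 2^{n − d + 1 − k(n−d+1, d+1)}. -/
/-- The supremum defining `kdist` is attained. -/
lemma exists_code_of_kdist (m d : ℕ) : ∃ C : Submodule (ZMod 2) (V m),
    Module.finrank (ZMod 2) C = kdist m d ∧ ∀ c ∈ C, c ≠ 0 → d ≤ hammingNorm c := by
  refine Nat.sSup_mem (s := {k : ℕ | ∃ C : Submodule (ZMod 2) (V m),
    Module.finrank (ZMod 2) C = k ∧ ∀ c ∈ C, c ≠ 0 → d ≤ hammingNorm c})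
    ⟨0, ⊥, by simp, fun c hc h => absurd (by simpa using hc) h⟩ ⟨m, ?_⟩
  rintro k ⟨C, rfl, -⟩
  simpa using Submodule.finrank_le C

lemma card_quotient_code {m : ℕ} (C : Submodule (ZMod 2) (V m)) :
    Nat.card (V m ⧸ C) = 2 ^ (m - Module.finrank (ZMod 2) C) := by
  have h := C.finrank_quotient_add_finrank
  rw [Module.finrank_fin_fun] at h
  rw [Module.natCard_eq_pow_finrank (K := ZMod 2), Nat.card_zmod, Nat.eq_sub_of_add_eq h]

lemma hammingDist_castLE_le {m n : ℕ} (h : m ≤ n) (u v : V n) :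
    hammingDist (u ∘ Fin.castLE h) (v ∘ Fin.castLE h) ≤ hammingDist u v :=
  Finset.card_le_card_of_injOn (Fin.castLE h) (fun i hi => by simpa using hi)
    (Fin.castLE_injective h).injOn

lemma hammingDist_le_of_castLE_eq {m n : ℕ} (h : m ≤ n) (u v : V n)
    (huv : u ∘ Fin.castLE h = v ∘ Fin.castLE h) : hammingDist u v ≤ n - m := by
  calc hammingDist u v ≤ (Finset.Ico m n).card := by
        refine Finset.card_le_card_of_injOn Fin.val (fun i hi => ?_) Fin.val_injective.injOn
        have hi' : u i ≠ v i := by simpa using hi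
        have : m ≤ i.val := by
          by_contra! hlt
          exact hi' (congrFun huv ⟨i.val, hlt⟩)
        simpa using this
    _ = n - m := by simp

/-- If `d` is even and positive and `n ≥ 2d`, then `χ_d(n) ≤ 2^{n−d+1−k(n−d+1, d+1)}`. -/
theorem chi_le_pow_kdist (n d : ℕ) (hd : Even d) (hd0 : 0 < d) (hn : 2 * d ≤ n) :
    chi d n ≤ 2 ^ (n - d + 1 - kdist (n - d + 1) (d + 1)) := by
  obtain ⟨C, hk, hC⟩ := exists_code_of_kdist (n - d + 1) (d + 1)
  have hmn : n - d + 1 ≤ n := by omega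
  let e := Finite.equivFinOfCardEq ((card_quotient_code C).trans (by rw [hk]))
  refine Nat.sInf_le ⟨fun u => e (C.mkQ (u ∘ Fin.castLE hmn)), fun u v huv heq => ?_⟩
  have hmem : u ∘ Fin.castLE hmn - v ∘ Fin.castLE hmn ∈ C :=
    (Submodule.Quotient.eq C).1 (e.injective heq)
  by_cases h0 : u ∘ Fin.castLE hmn = v ∘ Fin.castLE hmn
  · have := hammingDist_le_of_castLE_eq hmn u v h0
    omega
  · have h1 := hC _ hmem (sub_ne_zero.2 h0)
    rw [← neg_add_eq_sub, ← hammingDist_eq_hammingNorm, hammingDist_comm] at h1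
    have h2 := hammingDist_castLE_le hmn u v
    omega
end

section
/- For every even positive integer d and all positive integers n_1, n_2, one has χ_d(n_1 + n_2) ≤ χ'_d(n_1) · χ_d(n_2). -/
lemma hammingDist_split {n₁ n₂ : ℕ} (u v : V (n₁ + n₂)) :
    hammingDist u v =
      hammingDist (fun i => u (Fin.castAdd n₂ i)) (fun i => v (Fin.castAdd n₂ i)) +
      hammingDist (fun i => u (Fin.natAdd n₁ i)) (fun i => v (Fin.natAdd n₁ i)) := by
  simp only [hammingDist, Finset.card_filter]
  exact Fin.sum_univ_add _

/-- The infimum defining `chi'` is attained: coloring every word differently is a `d`-distance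
coloring, so the set of admissible numbers of colors is nonempty. -/
lemma exists_isDistColoring_chi' (d n : ℕ) :
    ∃ Γ : V n → Fin (chi' d n), IsDistColoring n d (chi' d n) Γ :=
  Nat.sInf_mem (s := {L : ℕ | ∃ Γ : V n → Fin L, IsDistColoring n d L Γ})
    ⟨_, Fintype.equivFin (V n), fun _ _ huv _ h => huv ((Fintype.equivFin (V n)).injective h)⟩

/-- The infimum defining `chi` is attained when `d` is positive. For `d = 0` no exactly
`d`-distance coloring exists, since a word is at distance `0` from itself. -/
lemma exists_isExactColoring_chi {d : ℕ} (hd : 0 < d) (n : ℕ) :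
    ∃ Γ : V n → Fin (chi d n), IsExactColoring n d (chi d n) Γ :=
  Nat.sInf_mem (s := {L : ℕ | ∃ Γ : V n → Fin L, IsExactColoring n d L Γ})
    ⟨_, Fintype.equivFin (V n), fun u v huv h => by
      obtain rfl := (Fintype.equivFin (V n)).injective h
      rw [hammingDist_self] at huv
      omega⟩

/-- For even positive `d` and positive `n₁, n₂`, `χ_d(n₁+n₂) ≤ χ'_d(n₁)·χ_d(n₂)`. -/
theorem chi_add_le (d n₁ n₂ : ℕ) (hd : Even d) (hd0 : 0 < d)
    (hn₁ : 0 < n₁) (hn₂ : 0 < n₂) :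
    chi d (n₁ + n₂) ≤ chi' d n₁ * chi d n₂ := by
  obtain ⟨Γ₁, h₁⟩ := exists_isDistColoring_chi' d n₁
  obtain ⟨Γ₂, h₂⟩ := exists_isExactColoring_chi hd0 n₂
  refine Nat.sInf_le ⟨fun u => finProdFinEquiv
    (Γ₁ fun i => u (Fin.castAdd n₂ i), Γ₂ fun i => u (Fin.natAdd n₁ i)), fun u v huv h => ?_⟩
  obtain ⟨e₁, e₂⟩ := Prod.mk.inj (finProdFinEquiv.injective h)
  rw [hammingDist_split] at huv
  by_cases hne : (fun i => u (Fin.castAdd n₂ i)) = fun i => v (Fin.castAdd n₂ i)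
  · rw [hne, hammingDist_self, zero_add] at huv
    exact h₂ _ _ huv e₂
  · exact h₁ _ _ hne (by omega) e₁
end

section
/- The Gray map φ : (Z_4)^n → (F_2)^{2n} is a distance-preserving map from Lee distance to Hamming distance and weight-preserving from Lee weight to Hamming weight: for all x, y ∈ (Z_4)^n, d_L(x,y) = d_H(φ(x), φ(y)) and w_L(x) = w_H(φ(x)). -/
theorem leeWt_sub (a b : ZMod 4) :
    leeWt (a - b) = ∑ k : Fin 2, if gray a k ≠ gray b k then 1 else 0 := by
  revert a b
  decide

/-- Coordinate `2 * i + k` of a word of length `2 * n`, indexed as bit `k` of the `i`-th block. -/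
def pairEquiv (n : ℕ) : Fin n × Fin 2 ≃ Fin (2 * n) :=
  finProdFinEquiv.trans (finCongr (mul_comm n 2))

theorem grayMap_pair {n : ℕ} (x : Fin n → ZMod 4) (p : Fin n × Fin 2) :
    grayMap x (pairEquiv n p) = gray (x p.1) p.2 := by
  obtain ⟨i, k⟩ := p
  have hval : (pairEquiv n (i, k)).val = k.val + 2 * i.val := rfl
  have hk := k.isLt
  unfold grayMap
  congr 2
  · congr 1
    rw [hval]
    omega
  · rw [hval]
    omega

theorem leeDist_eq_hammingDist {n : ℕ} (x y : Fin n → ZMod 4) :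
    leeDist x y = hammingDist (grayMap x) (grayMap y) := by
  unfold leeDist leeWtVec hammingDist
  rw [Finset.card_filter, ← (pairEquiv n).sum_comp, Fintype.sum_prod_type]
  simp only [grayMap_pair, Pi.sub_apply, leeWt_sub]

theorem grayMap_zero (n : ℕ) : grayMap (0 : Fin n → ZMod 4) = 0 := by
  have h : ∀ k, gray 0 k = 0 := by decide
  funext j
  exact h _

/-- The Gray map is distance-preserving from Lee distance to Hamming distance and
weight-preserving from Lee weight to Hamming weight. -/
theorem grayMap_isometry (n : ℕ) (x y : Fin n → ZMod 4) :
    leeDist x y = hammingDist (grayMap x) (grayMap y) ∧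
      leeWtVec x = hammingNorm (grayMap x) := by
  refine ⟨leeDist_eq_hammingDist x y, ?_⟩
  have h := leeDist_eq_hammingDist x 0
  rwa [grayMap_zero, hammingDist_zero_right, leeDist, sub_zero] at h
end

section
/- If A(n, d+1) = 2^{k(n, d+1)}, i.e. the maximum size of a binary code of length n and minimum distance at least d+1 is attained by a linear code, then χ'_d(n) = 2^{n − k(n, d+1)}. -/
/-- A code of minimum distance at least `d` has at most `Acode n d` words. -/
theorem card_le_Acode {n d : ℕ} (C : Finset (V n))
    (hC : ∀ a ∈ C, ∀ b ∈ C, a ≠ b → d ≤ hammingDist a b) : C.card ≤ Acode n d := by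
  refine le_csSup ⟨Fintype.card (V n), ?_⟩ ⟨C, rfl, hC⟩
  rintro m ⟨D, rfl, -⟩
  exact Finset.card_le_univ D

/-- The supremum defining `kdist n d` is attained. -/
theorem exists_submodule_kdist (n d : ℕ) : ∃ C : Submodule (ZMod 2) (V n),
    Module.finrank (ZMod 2) C = kdist n d ∧ ∀ c ∈ C, c ≠ 0 → d ≤ hammingNorm c := by
  refine Nat.sSup_mem (s := {k : ℕ | ∃ C : Submodule (ZMod 2) (V n),
    Module.finrank (ZMod 2) C = k ∧ ∀ c ∈ C, c ≠ 0 → d ≤ hammingNorm c}) ?_ ?_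
  · exact ⟨0, ⊥, by simp, fun c hc h0 => absurd ((Submodule.mem_bot _).1 hc) h0⟩
  · refine ⟨Module.finrank (ZMod 2) (V n), ?_⟩
    rintro k ⟨C, rfl, -⟩
    exact Submodule.finrank_le C

theorem card_quotient_eq {n : ℕ} (C : Submodule (ZMod 2) (V n)) :
    Nat.card (V n ⧸ C) = 2 ^ (n - Module.finrank (ZMod 2) C) := by
  have h1 := Module.natCard_eq_pow_finrank (K := ZMod 2) (V := V n ⧸ C)
  rw [h1, Submodule.finrank_quotient, Module.finrank_fin_fun, Nat.card_zmod]

/-- The cosets of a linear code of minimum distance at least `d + 1` are the color classes of a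
`d`-distance coloring. -/
theorem exists_coloring_of_submodule {n d : ℕ} (C : Submodule (ZMod 2) (V n))
    (hC : ∀ c ∈ C, c ≠ 0 → d + 1 ≤ hammingNorm c) :
    ∃ Γ : V n → Fin (2 ^ (n - Module.finrank (ZMod 2) C)), IsDistColoring n d _ Γ := by
  rw [← card_quotient_eq C]
  refine ⟨fun v => Finite.equivFin (V n ⧸ C) (Submodule.Quotient.mk v), ?_⟩
  intro u v huv hd heq
  have hmem : v - u ∈ C := (Submodule.Quotient.eq C).1 ((Finite.equivFin _).injective heq.symm)
  have hw := hC _ hmem (sub_ne_zero.2 huv.symm)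
  rw [hammingDist_eq_hammingNorm, ← sub_eq_neg_add] at hd
  omega

/-- Each color class is a code of minimum distance at least `d + 1`, which bounds the number of
words by the number of colors times the largest size of such a code. -/
theorem two_pow_le_of_coloring {n d L : ℕ} (Γ : V n → Fin L) (hΓ : IsDistColoring n d L Γ) :
    2 ^ n ≤ L * Acode n (d + 1) := by
  have h := Finset.card_le_mul_card_image_of_maps_to (f := Γ) (s := Finset.univ)
    (t := Finset.univ) (fun _ _ => Finset.mem_univ _) (Acode n (d + 1)) (fun c _ => by
      refine card_le_Acode _ fun a ha b hb hab => ?_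
      by_contra hlt
      refine hΓ a b hab (by omega) ?_
      rw [(Finset.mem_filter.1 ha).2, (Finset.mem_filter.1 hb).2])
  simpa [mul_comm, ZMod.card] using h

/-- If `A(n, d+1) = 2^{k(n, d+1)}`, then `χ'_d(n) = 2^{n − k(n, d+1)}`. -/
theorem chi'_eq_of_Acode_eq (n d : ℕ) (h : Acode n (d + 1) = 2 ^ kdist n (d + 1)) :
    chi' d n = 2 ^ (n - kdist n (d + 1)) := by
  obtain ⟨C, hk, hC⟩ := exists_submodule_kdist n (d + 1)
  have hcol := exists_coloring_of_submodule C hC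
  rw [hk] at hcol
  refine le_antisymm (Nat.sInf_le hcol) (le_csInf ⟨_, hcol⟩ ?_)
  rintro L ⟨Γ, hΓ⟩
  have hle := two_pow_le_of_coloring Γ hΓ
  have hkn : kdist n (d + 1) ≤ n := by
    simpa [hk] using Submodule.finrank_le C
  rw [h] at hle
  refine Nat.le_of_mul_le_mul_right ?_ (Nat.two_pow_pos (kdist n (d + 1)))
  rwa [← pow_add, Nat.sub_add_cancel hkn]
end

section
/- If there exists a k-dimensional F_2-linear subspace C of V_n such that no nonzero element of C has Hamming weight exactly d, then χ_d(n) ≤ 2^{n−k}. -/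
/-- If there is a `k`-dimensional linear subspace of `V n` in which no nonzero element
has Hamming weight exactly `d`, then `χ_d(n) ≤ 2^{n−k}`. -/
theorem chi_le_of_forbidden_linear_code (n d k : ℕ) (C : Submodule (ZMod 2) (V n))
    (hk : Module.finrank (ZMod 2) C = k)
    (hw : ∀ c ∈ C, c ≠ 0 → hammingNorm c ≠ d) :
    chi d n ≤ 2 ^ (n - k) := by
  rcases Nat.eq_zero_or_pos d with rfl | hd
  · -- No coloring exists for `d = 0`, since each word is at distance `0` from itself;
    -- `chi 0 n` is then the infimum of the empty set, which is `0` in `ℕ`.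
    have h : {L : ℕ | ∃ Γ : V n → Fin L, IsExactColoring n 0 L Γ} = ∅ := by
      ext L
      simp only [Set.mem_ofPred_eq, Set.mem_empty_iff_false, iff_false]
      rintro ⟨Γ, hΓ⟩
      exact hΓ 0 0 (hammingDist_self _) rfl
    simp [chi, h]
  · have hcard : Nat.card (V n ⧸ C) = 2 ^ (n - k) := by
      rw [Module.natCard_eq_pow_finrank (K := ZMod 2), Submodule.finrank_quotient, hk]
      simp
    let e : (V n ⧸ C) ≃ Fin (2 ^ (n - k)) := Finite.equivFinOfCardEq hcard
    refine Nat.sInf_le ⟨fun v => e (C.mkQ v), fun u v huv he => ?_⟩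
    have hmem : -u + v ∈ C := by
      have h := (Submodule.Quotient.eq C).1 (e.injective he.symm)
      rwa [sub_eq_neg_add] at h
    refine hw _ hmem ?_ ?_
    · intro h
      obtain rfl := neg_add_eq_zero.1 h
      rw [hammingDist_self] at huv
      omega
    · rw [← hammingDist_eq_hammingNorm, huv]
end

section
/- For all positive integers n and d, χ_d(n) ≤ 2^{n − k(n, d̄)}. -/
/-- The supremum defining `kbar` is attained: the dimensions that occur include `0`
(the zero subspace) and are at most `n`. -/
lemma exists_submodule_finrank_eq_kbar (n d : ℕ) :
    ∃ C : Submodule (ZMod 2) (V n), Module.finrank (ZMod 2) C = kbar n d ∧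
      ∀ c ∈ C, c ≠ 0 → hammingNorm c ≠ d := by
  refine Nat.sSup_mem (s := {k : ℕ | ∃ C : Submodule (ZMod 2) (V n),
    Module.finrank (ZMod 2) C = k ∧ ∀ c ∈ C, c ≠ 0 → hammingNorm c ≠ d}) ?_ ?_
  · exact ⟨0, ⊥, finrank_bot _ _, fun c hc h0 => absurd ((Submodule.mem_bot _).1 hc) h0⟩
  · refine ⟨n, ?_⟩
    rintro k ⟨C, rfl, -⟩
    simpa using C.finrank_le

/-- For all positive integers `n` and `d`, `χ_d(n) ≤ 2^{n − k(n, d̄)}`. -/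
theorem chi_le_pow_kbar (n d : ℕ) (hn : 0 < n) (hd : 0 < d) :
    chi d n ≤ 2 ^ (n - kbar n d) := by
  obtain ⟨C, hk, hC⟩ := exists_submodule_finrank_eq_kbar n d
  have hcard : Nat.card (V n ⧸ C) = 2 ^ (n - kbar n d) := by
    have hq := C.finrank_quotient_add_finrank
    rw [hk, Module.finrank_fin_fun] at hq
    rw [Module.natCard_eq_pow_finrank (K := ZMod 2), Nat.card_zmod]
    congr 1
    omega
  let e : (V n ⧸ C) ≃ Fin (2 ^ (n - kbar n d)) := Finite.equivFinOfCardEq hcard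
  refine Nat.sInf_le ⟨fun u => e (C.mkQ u), fun u v huv h => ?_⟩
  have hmem : u - v ∈ C := (Submodule.Quotient.eq C).1 (e.injective h)
  have hne : u ≠ v := hammingDist_pos.1 (huv ▸ hd)
  refine hC _ hmem (sub_ne_zero.2 hne) ?_
  -- Mathlib's `hammingDist_eq_hammingNorm` identifies the distance with the weight of `-u + v`.
  rw [← huv, hammingDist_comm, hammingDist_eq_hammingNorm, neg_add_eq_sub]
end

section
/- For all positive integers n and d with d ≤ n, one has k(n, d̄) ≥ n − ⌈log_2(1 + C(n−1, d−1))⌉, where C(n−1, d−1) is the binomial coefficient and ⌈x⌉ denotes the least integer not less than x. -/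
/-- Greedy choice of columns: a space with more than `C(n-1, e)` elements contains `n` vectors
such that no sum of `e + 1` of them, at distinct indices, vanishes. -/
lemma exists_columns {W : Type*} [AddCommGroup W] [Module (ZMod 2) W] [Fintype W]
    (n e : ℕ) (hW : Nat.choose (n - 1) e < Fintype.card W) (m : ℕ) (hm : m ≤ n) :
    ∃ h : ℕ → W, ∀ S ⊆ Finset.range m, S.card = e + 1 → ∑ i ∈ S, h i ≠ 0 := by
  classical
  induction m with
  | zero =>
    refine ⟨0, fun S hS hc => ?_⟩
    have : S = ∅ := by simpa using hS
    simp [this] at hc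
  | succ m ih =>
    obtain ⟨h, hh⟩ := ih (by omega)
    obtain ⟨w, hw⟩ : ∃ w, w ∉ ((Finset.range m).powersetCard e).image fun S => ∑ i ∈ S, h i := by
      by_contra! hall
      have h1 : Fintype.card W ≤ Nat.choose m e := by
        calc Fintype.card W
            = (((Finset.range m).powersetCard e).image fun S => ∑ i ∈ S, h i).card := by
              rw [Finset.eq_univ_iff_forall.2 hall, Finset.card_univ]
          _ ≤ _ := Finset.card_image_le
          _ = Nat.choose m e := by simp
      have h2 : Nat.choose m e ≤ Nat.choose (n - 1) e := Nat.choose_le_choose e (by omega)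
      omega
    have hupd : ∀ T : Finset ℕ, m ∉ T →
        ∑ i ∈ T, Function.update h m w i = ∑ i ∈ T, h i := fun T hT =>
      Finset.sum_congr rfl fun i hi =>
        Function.update_of_ne (by rintro rfl; exact hT hi) _ _
    refine ⟨Function.update h m w, fun S hS hc h0 => ?_⟩
    by_cases hmS : m ∈ S
    · rw [← Finset.add_sum_erase S _ hmS, hupd _ (Finset.notMem_erase m S),
        Function.update_self] at h0
      refine hw (Finset.mem_image.2 ⟨S.erase m, ?_, ?_⟩)
      · rw [Finset.mem_powersetCard, Finset.card_erase_of_mem hmS, hc]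
        refine ⟨fun i hi => ?_, rfl⟩
        have h1 := Finset.mem_range.1 (hS (Finset.mem_of_mem_erase hi))
        have h2 := Finset.ne_of_mem_erase hi
        exact Finset.mem_range.2 (by omega)
      · -- in characteristic two, `w + s = 0` means `s = w`
        have hneg : -w = w := by
          rw [← neg_one_smul (ZMod 2) w, show (-1 : ZMod 2) = 1 from rfl, one_smul]
        rw [← hneg]
        exact eq_neg_of_add_eq_zero_right h0
    · rw [hupd S hmS] at h0
      refine hh S (fun i hi => ?_) hc h0
      have h1 := Finset.mem_range.1 (hS hi)
      have h2 : i ≠ m := fun him => hmS (him ▸ hi)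
      exact Finset.mem_range.2 (by omega)

/-- For positive integers `d ≤ n`, `k(n, d̄) ≥ n − ⌈log₂(1 + C(n−1, d−1))⌉`. -/
theorem kbar_ge (n d : ℕ) (hn : 0 < n) (hd : 0 < d) (hdn : d ≤ n) :
    n - Nat.clog 2 (1 + Nat.choose (n - 1) (d - 1)) ≤ kbar n d := by
  classical
  set r := Nat.clog 2 (1 + Nat.choose (n - 1) (d - 1)) with hr
  have hcard : Nat.choose (n - 1) (d - 1) < Fintype.card (V r) := by
    have := Nat.le_pow_clog (b := 2) (by norm_num) (1 + Nat.choose (n - 1) (d - 1))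
    rw [← hr] at this
    simp only [Fintype.card_pi, ZMod.card, Finset.prod_const, Finset.card_univ, Fintype.card_fin]
    omega
  obtain ⟨h, hh⟩ := exists_columns n (d - 1) hcard n le_rfl
  let f : V n →ₗ[ZMod 2] V r := Fintype.linearCombination (ZMod 2) (fun i : Fin n => h i)
  have hdim : n - r ≤ Module.finrank (ZMod 2) (LinearMap.ker f) := by
    have h1 := LinearMap.finrank_range_add_finrank_ker f
    have h2 := Submodule.finrank_le (LinearMap.range f)
    simp only [Module.finrank_fin_fun] at h1 h2
    omega
  refine hdim.trans (le_csSup ⟨n, ?_⟩ ⟨LinearMap.ker f, rfl, ?_⟩)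
  · rintro k ⟨C, rfl, -⟩
    simpa using Submodule.finrank_le C
  · intro c hc _ hwt
    have hbit : ∀ x : ZMod 2, x ≠ 0 → x = 1 := by decide
    have hsum : f c = ∑ i ∈ Finset.univ.filter (fun i => c i ≠ 0), h i := by
      rw [Fintype.linearCombination_apply, Finset.sum_filter]
      refine Finset.sum_congr rfl fun i _ => ?_
      by_cases hi : c i = 0
      · simp [hi]
      · simp [hbit _ hi]
    refine hh ((Finset.univ.filter (fun i => c i ≠ 0)).map Fin.valEmbedding) ?_ ?_ ?_
    · intro i hi
      obtain ⟨j, -, rfl⟩ := Finset.mem_map.1 hi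
      exact Finset.mem_range.2 j.isLt
    · rw [Finset.card_map]
      have : (Finset.univ.filter (fun i => c i ≠ 0)).card = d := by
        simpa [hammingNorm] using hwt
      omega
    · rw [Finset.sum_map]
      exact hsum.symm.trans (LinearMap.mem_ker.1 hc)
end

section
/- For every positive integer n, k(n, 2̄) = n − ⌈log_2 n⌉; that is, the maximum dimension of an F_2-linear subspace of V_n containing no vector of Hamming weight exactly 2 equals n − ⌈log_2 n⌉. -/
lemma hammingNorm_single_sub_single {n : ℕ} {i j : Fin n} (hij : i ≠ j) :
    hammingNorm (Pi.single i 1 - Pi.single j 1 : V n) = 2 := by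
  rw [hammingNorm, Finset.card_eq_two]
  refine ⟨i, j, hij, ?_⟩
  ext l
  by_cases hi : l = i
  · subst hi; simp [hij]
  · by_cases hj : l = j
    · subst hj; simp [hi]
    · simp [hi, hj]

/-- Distinct unit vectors have distinct syndromes, and there are `2 ^ (n - k)` syndromes. -/
lemma finrank_le_of_forall_hammingNorm_ne_two {n : ℕ} (C : Submodule (ZMod 2) (V n))
    (hC : ∀ c ∈ C, c ≠ 0 → hammingNorm c ≠ 2) :
    Module.finrank (ZMod 2) C ≤ n - Nat.clog 2 n := by
  have hinj : Function.Injective (fun i : Fin n => C.mkQ (Pi.single i 1)) := by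
    intro i j h
    by_contra hij
    have hmem : (Pi.single i 1 - Pi.single j 1 : V n) ∈ C := (Submodule.Quotient.eq C).1 h
    have hnorm := hammingNorm_single_sub_single hij
    refine hC _ hmem ?_ hnorm
    intro h0
    rw [h0, hammingNorm_zero] at hnorm
    omega
  have hcard := Nat.card_le_card_of_injective _ hinj
  rw [Nat.card_fin, Module.natCard_eq_pow_finrank (K := ZMod 2), Nat.card_zmod] at hcard
  have hclog := Nat.clog_le_of_le_pow hcard
  have hsum := C.finrank_quotient_add_finrank
  rw [Module.finrank_fin_fun] at hsum
  omega

/-- The code is the kernel of a linear map with pairwise distinct values on the unit vectors. -/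
lemma exists_submodule_forall_hammingNorm_ne_two {n r : ℕ} (hr : n ≤ 2 ^ r) :
    ∃ C : Submodule (ZMod 2) (V n), n - r ≤ Module.finrank (ZMod 2) C ∧
      ∀ c ∈ C, hammingNorm c ≠ 2 := by
  obtain ⟨f⟩ : Nonempty (Fin n ↪ (Fin r → ZMod 2)) :=
    Function.Embedding.nonempty_of_card_le (by simpa using hr)
  let g : V n →ₗ[ZMod 2] (Fin r → ZMod 2) := Fintype.linearCombination (ZMod 2) f
  refine ⟨LinearMap.ker g, ?_, ?_⟩
  · have hsum : Module.finrank (ZMod 2) (LinearMap.range g) +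
        Module.finrank (ZMod 2) (LinearMap.ker g) = Module.finrank (ZMod 2) (V n) :=
      g.finrank_range_add_finrank_ker
    have hle := (LinearMap.range g).finrank_le
    rw [Module.finrank_fin_fun] at hsum hle
    omega
  · intro c hc hnorm
    obtain ⟨i, j, hij, hs⟩ := Finset.card_eq_two.1 hnorm
    have hsupp : ∀ l, c l ≠ 0 ↔ l = i ∨ l = j := by
      intro l
      simpa using Finset.ext_iff.1 hs l
    have hone : ∀ x : ZMod 2, x ≠ 0 → x = 1 := by decide
    rw [LinearMap.mem_ker, show g c = _ from Fintype.linearCombination_apply _ _ _,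
      ← Finset.sum_subset (Finset.subset_univ {i, j}), Finset.sum_pair hij,
      hone _ ((hsupp i).2 (.inl rfl)), hone _ ((hsupp j).2 (.inr rfl)),
      one_smul, one_smul] at hc
    · apply hij
      apply f.injective
      -- in characteristic two, `f i + f j = 0` means `f i = f j`
      have hneg : -f j = f j := funext fun l => ZMod.neg_eq_self_mod_two (f j l)
      rw [eq_neg_of_add_eq_zero_left hc, hneg]
    · intro l _ hl
      have : c l = 0 := by
        by_contra h
        exact hl (by simpa using (hsupp l).1 h)
      rw [this, zero_smul]

/-- For every positive integer `n`, `k(n, 2̄) = n − ⌈log₂ n⌉`. -/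
theorem kbar_two (n : ℕ) (hn : 0 < n) :
    kbar n 2 = n - Nat.clog 2 n := by
  obtain ⟨C, hdim, hC⟩ :=
    exists_submodule_forall_hammingNorm_ne_two (Nat.le_pow_clog one_lt_two n)
  have hle := finrank_le_of_forall_hammingNorm_ne_two C fun c hc _ => hC c hc
  refine IsGreatest.csSup_eq ⟨⟨C, hle.antisymm hdim, fun c hc _ => hC c hc⟩, ?_⟩
  rintro k ⟨D, rfl, hD⟩
  exact finrank_le_of_forall_hammingNorm_ne_two D hD
end

section
/- If there exist a d-distance coloring of V_{n_1} with L_1 colors and an exactly d-distance coloring of V_{n_2} with L_2 colors, then there exists an exactly d-distance coloring of V_{n_1 + n_2} with L_1·L_2 colors. -/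
theorem hammingDist_eq_add {m n : ℕ} (u v : V (m + n)) :
    hammingDist u v =
      hammingDist (fun i => u (Fin.castAdd n i) : V m) (fun i => v (Fin.castAdd n i)) +
      hammingDist (fun i => u (Fin.natAdd m i) : V n) (fun i => v (Fin.natAdd m i)) := by
  simp only [hammingDist, Finset.card_filter, Fin.sum_univ_add]

/-- Given a `d`-distance coloring of `V n₁` with `L₁` colors and an exactly `d`-distance
coloring of `V n₂` with `L₂` colors, there is an exactly `d`-distance coloring of
`V (n₁ + n₂)` with `L₁·L₂` colors. -/
theorem exact_coloring_of_product (n₁ n₂ d L₁ L₂ : ℕ)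
    (h₁ : ∃ Γ₁ : V n₁ → Fin L₁, IsDistColoring n₁ d L₁ Γ₁)
    (h₂ : ∃ Γ₂ : V n₂ → Fin L₂, IsExactColoring n₂ d L₂ Γ₂) :
    ∃ Γ : V (n₁ + n₂) → Fin (L₁ * L₂), IsExactColoring (n₁ + n₂) d (L₁ * L₂) Γ := by
  obtain ⟨Γ₁, h₁⟩ := h₁
  obtain ⟨Γ₂, h₂⟩ := h₂
  refine ⟨fun u => finProdFinEquiv
    (Γ₁ fun i => u (Fin.castAdd n₂ i), Γ₂ fun i => u (Fin.natAdd n₁ i)), ?_⟩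
  intro u v huv heq
  obtain ⟨e₁, e₂⟩ := Prod.mk.inj (finProdFinEquiv.injective heq)
  rw [hammingDist_eq_add] at huv
  by_cases h : (fun i => u (Fin.castAdd n₂ i) : V n₁) = fun i => v (Fin.castAdd n₂ i)
  · rw [h, hammingDist_self, zero_add] at huv
    exact h₂ _ _ huv e₂
  · exact h₁ _ _ h (by omega) e₁
end
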